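/- arXiv:2512.11311 — 3 statements merged into one kernel-verified Lean document; each statement's English description precedes it below -/
import Mathlib

section
/- Let K be a real quadratic field whose maximal order (ring of integers) is unit-generated, i.e., generated as a ℤ-module by its group of units. Then K is of narrow Richaud–Degert type: its fundamental radicand D₀ (the squarefree integer with K = ℚ(√D₀)) satisfies D₀ = m² + r for some integers m ≥ 1 and r ∈ {1, −1, 4, −4}. -/
noncomputable section

/-- `x` is a unit of the subring `O` of `ℝ`. -/
def IsUnitOf (O : Subring ℝ) (x : ℝ) : Prop := x ∈ O ∧ ∃ y ∈ O, x * y = 1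

/-- `O` is an order of the subfield `K` of `ℝ`: a subring of the ring of integers of `K`
that is a free `ℤ`-module of rank 2 with fraction field `K`. -/
def IsOrderOf (K : Subfield ℝ) (O : Subring ℝ) : Prop :=
  (O : Set ℝ) ⊆ K ∧ (∀ x ∈ O, IsIntegral ℤ x) ∧
    Module.Free ℤ O ∧ Module.finrank ℤ O = 2 ∧
    ∀ x ∈ K, ∃ p ∈ O, ∃ q ∈ O, q ≠ 0 ∧ x = p / q

/-- A subring `O` of `ℝ` is unit-generated if it is generated, as a `ℤ`-module
(equivalently, as an additive group), by its set of units. -/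
def IsUnitGenerated (O : Subring ℝ) : Prop :=
  AddSubgroup.closure {x : ℝ | IsUnitOf O x} = O.toAddSubgroup

/-- `K` is a real quadratic field: `K = ℚ(√D)` for a positive nonsquare integer `D`. -/
def IsRealQuadratic (K : Subfield ℝ) : Prop :=
  ∃ D : ℤ, 0 < D ∧ ¬ IsSquare D ∧ K = Subfield.closure {Real.sqrt D}

/-- The ring of integers (maximal order) of a subfield `K` of `ℝ`: the elements of `K`
that are integral over `ℤ`. -/
def ringOfIntegers (K : Subfield ℝ) : Subring ℝ :=
  (integralClosure ℤ ℝ).toSubring ⊓ K.toSubring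

lemma aux_irr {D : ℤ} (hD : 1 < D) (hsf : Squarefree D) : Irrational (Real.sqrt D) := by
  rw [irrational_sqrt_intCast_iff]
  refine ⟨?_, by omega⟩
  rintro ⟨k, rfl⟩
  have := hsf k (dvd_refl _)
  rw [Int.isUnit_iff] at this
  rcases this with h | h <;> subst h <;> norm_num at hD

lemma aux_uniq {s : ℝ} (hs : Irrational s) {a b c d : ℤ}
    (h : (a : ℝ) + b * s = c + d * s) : a = c ∧ b = d := by
  by_cases hbd : b = d
  · subst hbd
    exact ⟨by exact_mod_cast (add_right_cancel h), rfl⟩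
  · exfalso
    have h1 : ((b : ℝ) - d) ≠ 0 := by
      intro h0
      apply hbd
      exact_mod_cast sub_eq_zero.mp h0
    apply hs
    refine ⟨((c - a : ℤ) : ℚ) / ((b - d : ℤ) : ℚ), ?_⟩
    push_cast
    rw [div_eq_iff h1]
    linarith

lemma aux_K {D : ℤ} (hD : 1 < D) (hirr : Irrational (Real.sqrt D)) {x : ℝ}
    (hx : x ∈ Subfield.closure {Real.sqrt D}) : ∃ a b : ℚ, x = a + b * Real.sqrt D := by
  have hD0 : (0 : ℝ) ≤ D := by exact_mod_cast (by omega : (0:ℤ) ≤ D)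
  have hs : Real.sqrt D * Real.sqrt D = D := Real.mul_self_sqrt hD0
  induction hx using Subfield.closure_induction with
  | mem x hx => 
    rw [Set.mem_singleton_iff] at hx
    exact ⟨0, 1, by simp [hx]⟩
  | one => exact ⟨1, 0, by simp⟩
  | add x y _ _ hx hy =>
    obtain ⟨a, b, rfl⟩ := hx
    obtain ⟨c, d, rfl⟩ := hy
    exact ⟨a + c, b + d, by push_cast; ring⟩
  | neg x _ hx =>
    obtain ⟨a, b, rfl⟩ := hx
    exact ⟨-a, -b, by push_cast; ring⟩
  | inv x _ hx =>
    obtain ⟨a, b, rfl⟩ := hx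
    by_cases hb : b = 0
    · subst hb
      exact ⟨a⁻¹, 0, by simp⟩
    · have hb' : (b : ℝ) ≠ 0 := by exact_mod_cast hb
      have h1 : (a : ℝ) + b * Real.sqrt D ≠ 0 := by
        intro h
        apply hirr
        refine ⟨-a / b, ?_⟩
        push_cast
        rw [div_eq_iff hb']
        linarith
      have h2 : (a : ℝ) - b * Real.sqrt D ≠ 0 := by
        intro h
        apply hirr
        refine ⟨a / b, ?_⟩
        push_cast
        rw [div_eq_iff hb']
        linarith
      have h3 : (a : ℝ) ^ 2 - D * b ^ 2 = (a + b * Real.sqrt D) * (a - b * Real.sqrt D) := by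
        linear_combination (b : ℝ) ^ 2 * hs
      have h4 : (a : ℝ) ^ 2 - D * b ^ 2 ≠ 0 := by rw [h3]; exact mul_ne_zero h1 h2
      refine ⟨a / (a ^ 2 - D * b ^ 2), -b / (a ^ 2 - D * b ^ 2), ?_⟩
      push_cast
      apply inv_eq_of_mul_eq_one_right
      have h5 : (a + b * Real.sqrt D) * (a / ((a : ℝ) ^ 2 - D * b ^ 2) +
          -b / ((a : ℝ) ^ 2 - D * b ^ 2) * Real.sqrt D) =
          ((a + b * Real.sqrt D) * (a - b * Real.sqrt D)) / ((a : ℝ) ^ 2 - D * b ^ 2) := by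
        ring
      rw [h5, ← h3, div_self h4]
  | mul x y _ _ hx hy =>
    obtain ⟨a, b, rfl⟩ := hx
    obtain ⟨c, d, rfl⟩ := hy
    exact ⟨a * c + D * b * d, a * d + b * c, by
      push_cast
      linear_combination (b : ℝ) * d * hs⟩

lemma aux_sqfree {D : ℤ} (hsf : Squarefree D) (q : ℚ) (n : ℤ) (h : (D : ℚ) * q ^ 2 = n) :
    ∃ u : ℤ, q = u := by
  have hq : (q.den : ℚ) ≠ 0 := by exact_mod_cast q.den_ne_zero
  have h1 : D * q.num ^ 2 = n * (q.den : ℤ) ^ 2 := by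
    have h2 : (D : ℚ) * q.num ^ 2 = n * q.den ^ 2 := by
      rw [← h, ← Rat.mul_den_eq_num q]
      ring
    exact_mod_cast h2
  have hcop : IsCoprime ((q.den : ℤ) ^ 2) (q.num ^ 2) := by
    apply IsCoprime.pow
    rw [Int.isCoprime_iff_gcd_eq_one, Int.gcd_comm]
    exact q.reduced
  have h3 : (q.den : ℤ) ^ 2 ∣ D := by
    apply hcop.dvd_of_dvd_mul_right
    exact ⟨n, by rw [h1]; ring⟩
  have h4 := hsf (q.den : ℤ) (by rwa [← sq])
  rw [Int.isUnit_iff] at h4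
  have h5 : q.den = 1 := by omega
  exact ⟨q.num, (Rat.den_eq_one_iff q |>.mp h5).symm⟩

lemma aux_int {D : ℤ} (hD : 1 < D) (hsf : Squarefree D) {x : ℝ}
    (hx : x ∈ ringOfIntegers (Subfield.closure {Real.sqrt D})) :
    ∃ t u : ℤ, x = (t + u * Real.sqrt D) / 2 ∧ (4 : ℤ) ∣ t ^ 2 - D * u ^ 2 := by
  have hirr := aux_irr hD hsf
  have hD0 : (0 : ℝ) ≤ D := by exact_mod_cast (by omega : (0:ℤ) ≤ D)
  have hs : Real.sqrt D * Real.sqrt D = D := Real.mul_self_sqrt hD0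
  obtain ⟨hint, hmem⟩ := Subring.mem_inf.mp hx
  have hint : IsIntegral ℤ x := hint
  obtain ⟨a, b, hab⟩ := aux_K hD hirr hmem
  by_cases hb : b = 0
  · subst hb
    simp only [Rat.cast_zero, zero_mul, add_zero] at hab
    have h1 : IsIntegral ℤ a := by
      have : IsIntegral ℤ (algebraMap ℚ ℝ a) := by rw [hab] at hint; exact hint
      exact (isIntegral_algebraMap_iff (algebraMap ℚ ℝ).injective).mp this
    obtain ⟨k, hk⟩ := IsIntegrallyClosed.isIntegral_iff.mp h1
    refine ⟨2 * k, 0, ?_, ⟨k ^ 2, by ring⟩⟩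
    rw [hab, ← hk]; simp
  · have hb' : (b : ℝ) ≠ 0 := by exact_mod_cast hb
    have hintQ : IsIntegral ℚ x := hint.tower_top
    have hp : minpoly ℚ x = Polynomial.X ^ 2 +
        (Polynomial.C (-(2 * a)) * Polynomial.X + Polynomial.C (a ^ 2 - D * b ^ 2)) := by
      symm
      apply Polynomial.eq_of_monic_of_dvd_of_natDegree_le (minpoly.monic hintQ)
      · monicity!
      · apply minpoly.dvd
        simp [hab]
        linear_combination (b : ℝ) ^ 2 * hs
      · have h2 : 2 ≤ (minpoly ℚ x).natDegree := by
          rw [minpoly.two_le_natDegree_iff hintQ]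
          rintro ⟨q, hq⟩
          apply hirr
          refine ⟨(q - a) / b, ?_⟩
          push_cast
          rw [div_eq_iff hb']
          have : (q : ℝ) = x := hq
          linarith
        refine le_trans ?_ h2
        compute_degree
    have hz := minpoly.isIntegrallyClosed_eq_field_fractions' ℚ hint
    rw [hp] at hz
    obtain ⟨c, hc⟩ : ∃ c : ℚ, c = a ^ 2 - D * b ^ 2 := ⟨_, rfl⟩
    rw [← hc] at hz
    have c0 := congrArg (fun p => Polynomial.coeff p 0) hz
    have c1 := congrArg (fun p => Polynomial.coeff p 1) hz
    simp [Polynomial.coeff_X, Polynomial.coeff_C] at c0 c1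
    rw [hc] at c0
    set n := (minpoly ℤ x).coeff 0
    set m := (minpoly ℤ x).coeff 1
    obtain ⟨u, hu⟩ := aux_sqfree hsf (2 * b) (m ^ 2 - 4 * n) (by
      push_cast
      rw [← c0, ← c1]; ring)
    refine ⟨-m, u, ?_, ⟨n, ?_⟩⟩
    · have hu' : (2 : ℝ) * b = u := by exact_mod_cast hu
      have hm : -(2 * (a : ℝ)) = m := by exact_mod_cast c1
      rw [hab]; push_cast
      rw [← hu', ← hm]; ring
    · have : ((-m : ℚ)) ^ 2 - D * u ^ 2 = 4 * n := by
        rw [← hu, ← c0, ← c1]; ring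
      exact_mod_cast this

lemma aux_unit {D : ℤ} (hD : 1 < D) (hsf : Squarefree D) {x : ℝ}
    (hx : IsUnitOf (ringOfIntegers (Subfield.closure {Real.sqrt D})) x) :
    ∃ t u : ℤ, x = (t + u * Real.sqrt D) / 2 ∧
      (t ^ 2 - D * u ^ 2 = 4 ∨ t ^ 2 - D * u ^ 2 = -4) := by
  have hirr := aux_irr hD hsf
  have hD0 : (0 : ℝ) ≤ D := by exact_mod_cast (by omega : (0:ℤ) ≤ D)
  have hs : Real.sqrt D * Real.sqrt D = D := Real.mul_self_sqrt hD0
  obtain ⟨hx1, y, hy, hxy⟩ := hx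
  obtain ⟨t, u, rfl, k, hk⟩ := aux_int hD hsf hx1
  obtain ⟨v, w, rfl, l, hl⟩ := aux_int hD hsf hy
  have h1 : ((t * v + D * u * w : ℤ) : ℝ) + ((t * w + u * v : ℤ) : ℝ) * Real.sqrt D
      = ((4 : ℤ) : ℝ) + ((0 : ℤ) : ℝ) * Real.sqrt D := by
    push_cast
    linear_combination 4 * hxy - (u : ℝ) * w * hs
  obtain ⟨e1, e2⟩ := aux_uniq hirr h1
  have h2 : k * l = 1 := by
    have : (4 * k) * (4 * l) = 16 := by
      rw [← hk, ← hl]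
      linear_combination (t * v + D * u * w + 4) * e1 - D * (t * w + u * v) * e2
    linarith
  refine ⟨t, u, rfl, ?_⟩
  rcases Int.eq_one_or_neg_one_of_mul_eq_one h2 with h | h <;> rw [hk, h] <;> simp

lemma aux_unit_mul {O : Subring ℝ} {x y : ℝ} (hx : IsUnitOf O x) (hy : IsUnitOf O y) :
    IsUnitOf O (x * y) := by
  obtain ⟨hx, a, ha, hxa⟩ := hx
  obtain ⟨hy, b, hb, hyb⟩ := hy
  exact ⟨O.mul_mem hx hy, a * b, O.mul_mem ha hb, by
    linear_combination y * b * hxa + hyb⟩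

lemma aux_unit_inv {O : Subring ℝ} {x : ℝ} (hx : IsUnitOf O x) : IsUnitOf O x⁻¹ := by
  obtain ⟨hx, a, ha, hxa⟩ := hx
  rw [inv_eq_of_mul_eq_one_right hxa]
  exact ⟨ha, x, hx, by rw [mul_comm]; exact hxa⟩

lemma aux_unit_neg {O : Subring ℝ} {x : ℝ} (hx : IsUnitOf O x) : IsUnitOf O (-x) := by
  obtain ⟨hx, a, ha, hxa⟩ := hx
  exact ⟨O.neg_mem hx, -a, O.neg_mem ha, by linarith⟩

lemma aux_unit_ne {O : Subring ℝ} {x : ℝ} (hx : IsUnitOf O x) : x ≠ 0 := by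
  obtain ⟨hx, a, ha, hxa⟩ := hx
  rintro rfl
  simp at hxa

lemma aux_unit_pow {O : Subring ℝ} {x : ℝ} (hx : IsUnitOf O x) (n : ℕ) : IsUnitOf O (x ^ n) := by
  induction n with
  | zero => exact ⟨by simpa using O.one_mem, 1, O.one_mem, by simp⟩
  | succ n ih => rw [pow_succ]; exact aux_unit_mul ih hx

/-- Reduce a property of units to units at least one. -/
lemma aux_unit_cases {O : Subring ℝ} {P : ℝ → Prop} (hneg : ∀ x, P x → P (-x))
    (h1 : ∀ x, IsUnitOf O x → 1 ≤ x → P x ∧ P x⁻¹) {x : ℝ} (hx : IsUnitOf O x) : P x := by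
  have key : ∀ x, IsUnitOf O x → 0 < x → P x := by
    intro x hx hpos
    rcases le_total 1 x with h | h
    · exact (h1 x hx h).1
    · have := (h1 _ (aux_unit_inv hx) ((one_le_inv₀ hpos).mpr h)).2
      rwa [inv_inv] at this
  rcases lt_or_gt_of_ne (aux_unit_ne hx) with h | h
  · have := hneg _ (key (-x) (aux_unit_neg hx) (by linarith))
    rwa [neg_neg] at this
  · exact key x hx h

lemma aux_sqrt_mem (D : ℤ) (hD : 1 < D) :
    Real.sqrt D ∈ ringOfIntegers (Subfield.closure {Real.sqrt D}) := by
  have hD0 : (0 : ℝ) ≤ D := by exact_mod_cast (by omega : (0:ℤ) ≤ D)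
  refine Subring.mem_inf.mpr ⟨?_, Subfield.subset_closure rfl⟩
  change IsIntegral ℤ (Real.sqrt D)
  apply IsIntegral.of_pow (n := 2) (by norm_num)
  rw [Real.sq_sqrt hD0]
  exact isIntegral_algebraMap (R := ℤ) (x := D)

lemma aux_half_mem (D : ℤ) (hD : 1 < D) (k : ℤ) (hk : D = 4 * k + 1) :
    (1 + Real.sqrt D) / 2 ∈ ringOfIntegers (Subfield.closure {Real.sqrt D}) := by
  have hD0 : (0 : ℝ) ≤ D := by exact_mod_cast (by omega : (0:ℤ) ≤ D)
  have hs : Real.sqrt D * Real.sqrt D = D := Real.mul_self_sqrt hD0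
  have hkr : (D : ℝ) = 4 * k + 1 := by exact_mod_cast hk
  refine Subring.mem_inf.mpr ⟨?_, ?_⟩
  · change IsIntegral ℤ _
    refine ⟨Polynomial.X ^ 2 + (Polynomial.C (-1) * Polynomial.X + Polynomial.C (-k)), ?_, ?_⟩
    · monicity!
    · simp only [Polynomial.eval₂_add, Polynomial.eval₂_mul, Polynomial.eval₂_pow,
        Polynomial.eval₂_X, Polynomial.eval₂_C]
      simp
      linear_combination hs / 4 + hkr / 4
  · have h2 : (2 : ℝ) ∈ Subfield.closure {Real.sqrt D} := by
      exact_mod_cast natCast_mem (Subfield.closure {Real.sqrt D}) 2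
    exact Subfield.div_mem _ (Subfield.add_mem _ (Subfield.one_mem _)
      (Subfield.subset_closure rfl)) h2

lemma aux_closure {O : Subring ℝ} (hug : IsUnitGenerated O) (M : AddSubgroup ℝ)
    (h : ∀ x, IsUnitOf O x → x ∈ M) {x : ℝ} (hx : x ∈ O) : x ∈ M := by
  have h1 : AddSubgroup.closure {x : ℝ | IsUnitOf O x} ≤ M := by
    rw [AddSubgroup.closure_le]
    exact fun x hx => h x hx
  rw [IsUnitGenerated] at hug
  rw [hug] at h1
  exact h1 hx

lemma aux_fund {D : ℤ} (hD : 1 < D) (hsf : Squarefree D)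
    (hug : IsUnitGenerated (ringOfIntegers (Subfield.closure {Real.sqrt D}))) :
    ∃ e : ℝ, IsUnitOf (ringOfIntegers (Subfield.closure {Real.sqrt D})) e ∧ 1 < e ∧
      ∀ x, IsUnitOf (ringOfIntegers (Subfield.closure {Real.sqrt D})) x → 1 < x → e ≤ x := by
  have hirr := aux_irr hD hsf
  have hD1 : (1 : ℝ) ≤ D := by exact_mod_cast hD.le
  have hs : Real.sqrt D * Real.sqrt D = D := Real.mul_self_sqrt (by linarith)
  have hs1 : 1 ≤ Real.sqrt D := Real.one_le_sqrt.mpr hD1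
  set O := ringOfIntegers (Subfield.closure {Real.sqrt D}) with hO
  have hex : ∃ x, IsUnitOf O x ∧ 1 < x := by
    by_contra! hcon
    have hm : Real.sqrt D ∈ (Int.castAddHom ℝ).range := by
      apply aux_closure hug _ _ (aux_sqrt_mem D hD)
      intro x hx
      refine aux_unit_cases (P := fun x => x ∈ (Int.castAddHom ℝ).range)
        (fun x hx => neg_mem hx) ?_ hx
      intro x hx h1
      have : x = 1 := le_antisymm (hcon x hx) h1
      subst this
      rw [inv_one]
      exact ⟨⟨1, by simp⟩, ⟨1, by simp⟩⟩
    obtain ⟨k, hk⟩ := hm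
    exact hirr ⟨k, by simpa using hk⟩
  obtain ⟨x₀, hx₀, hx₀1⟩ := hex
  set B : ℤ := ⌈x₀ + 1⌉
  have hB : x₀ + 1 ≤ B := Int.le_ceil _
  set S : Set ℝ := {x | IsUnitOf O x ∧ 1 < x ∧ x ≤ x₀}
  have hfin : S.Finite := by
    apply Set.Finite.subset (((Set.finite_Icc (-B) B).prod (Set.finite_Icc (-B) B)).image
      (fun p : ℤ × ℤ => ((p.1 : ℝ) + p.2 * Real.sqrt D) / 2))
    rintro x ⟨hx, hx1, hx2⟩
    obtain ⟨t, u, htu, hn⟩ := aux_unit hD hsf hx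
    set x' : ℝ := (t - u * Real.sqrt D) / 2 with hx'
    have hprod : x * x' = ((t ^ 2 - D * u ^ 2 : ℤ) : ℝ) / 4 := by
      rw [htu, hx']; push_cast
      linear_combination -(u : ℝ) ^ 2 / 4 * hs
    have habs : |x'| < 1 := by
      have h1 : |x * x'| = 1 := by
        rw [hprod]
        rcases hn with h | h <;> rw [h] <;> norm_num
      rw [abs_mul, abs_of_pos (by linarith)] at h1
      by_contra! h2
      nlinarith
    rw [abs_lt] at habs
    have ht : (t : ℝ) = x + x' := by rw [htu, hx']; ring
    have hu : (u : ℝ) * Real.sqrt D = x - x' := by rw [htu, hx']; ring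
    have hu0 : 0 < (u : ℝ) := by
      by_contra! h
      nlinarith
    have hu1 : (u : ℝ) ≤ B := by nlinarith
    have ht1 : (t : ℝ) ≤ B := by linarith
    have ht0 : (0 : ℝ) < t := by linarith
    have i1 : u ≤ B := by exact_mod_cast hu1
    have i2 : t ≤ B := by exact_mod_cast ht1
    have i3 : 0 < u := by exact_mod_cast hu0
    have i4 : 0 < t := by exact_mod_cast ht0
    exact ⟨(t, u), ⟨⟨by simp only; omega, i2⟩, ⟨by simp only; omega, i1⟩⟩, htu.symm⟩
  obtain ⟨e, ⟨he, he1, he2⟩, hmin⟩ := Set.exists_min_image S id hfin ⟨x₀, hx₀, hx₀1, le_refl _⟩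
  refine ⟨e, he, he1, fun x hx hx1 => ?_⟩
  rcases le_total x x₀ with h | h
  · exact hmin x ⟨hx, hx1, h⟩
  · exact he2.trans h

lemma aux_main {D : ℤ} (hD : 1 < D) (hsf : Squarefree D)
    (hug : IsUnitGenerated (ringOfIntegers (Subfield.closure {Real.sqrt D}))) :
    ∃ t u : ℤ, (t ^ 2 - D * u ^ 2 = 4 ∨ t ^ 2 - D * u ^ 2 = -4) ∧
      ∀ x ∈ ringOfIntegers (Subfield.closure {Real.sqrt D}),
        ∃ p q : ℤ, x = p + q * ((t + u * Real.sqrt D) / 2) := by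
  have hD1 : (1 : ℝ) ≤ D := by exact_mod_cast hD.le
  have hs : Real.sqrt D * Real.sqrt D = D := Real.mul_self_sqrt (by linarith)
  obtain ⟨e, he, he1, hmin⟩ := aux_fund hD hsf hug
  obtain ⟨t, u, htu, hn⟩ := aux_unit hD hsf he
  set O := ringOfIntegers (Subfield.closure {Real.sqrt D}) with hO
  refine ⟨t, u, hn, ?_⟩
  rw [← htu]
  obtain ⟨N, hN1, hN2⟩ : ∃ N : ℤ, N * N = 1 ∧ t ^ 2 - D * u ^ 2 = 4 * N := by
    rcases hn with h | h
    · exact ⟨1, by norm_num, by omega⟩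
    · exact ⟨-1, by norm_num, by omega⟩
  have hN2' : (t : ℝ) ^ 2 - D * u ^ 2 = 4 * N := by exact_mod_cast hN2
  have hN1' : (N : ℝ) * N = 1 := by exact_mod_cast hN1
  have hquad : e * e = t * e - N := by
    rw [htu]
    linear_combination (u : ℝ) ^ 2 / 4 * hs - hN2' / 4
  have hinv : e⁻¹ = N * (t - e) := by
    apply inv_eq_of_mul_eq_one_right
    linear_combination -(N : ℝ) * hquad + hN1'
  let M : AddSubgroup ℝ :=
    { carrier := {x | ∃ p q : ℤ, x = p + q * e}
      zero_mem' := ⟨0, 0, by simp⟩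
      add_mem' := by
        rintro _ _ ⟨a, b, rfl⟩ ⟨c, d, rfl⟩
        exact ⟨a + c, b + d, by push_cast; ring⟩
      neg_mem' := by
        rintro _ ⟨a, b, rfl⟩
        exact ⟨-a, -b, by push_cast; ring⟩ }
  have hpow : ∀ n : ℕ, e ^ n ∈ M := by
    intro n
    induction n with
    | zero => exact ⟨1, 0, by simp⟩
    | succ n ih =>
      obtain ⟨p, q, h⟩ := ih
      refine ⟨-(q * N), p + q * t, ?_⟩
      rw [pow_succ, h]; push_cast
      linear_combination (q : ℝ) * hquad
  have hpow' : ∀ n : ℕ, (e ^ n)⁻¹ ∈ M := by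
    intro n
    induction n with
    | zero => exact ⟨1, 0, by simp⟩
    | succ n ih =>
      obtain ⟨p, q, h⟩ := ih
      refine ⟨p * N * t + q, -(p * N), ?_⟩
      rw [pow_succ, mul_inv, h, hinv]; push_cast
      linear_combination -(q : ℝ) * N * hquad + q * hN1'
  intro x hx
  refine aux_closure hug M ?_ hx
  intro x hx
  refine aux_unit_cases (P := fun x => x ∈ M) (fun x hx => neg_mem hx) ?_ hx
  intro x hx h1
  obtain ⟨n, hn1, hn2⟩ := exists_nat_pow_near h1 he1
  have hpos : 0 < e ^ n := pow_pos (by linarith) n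
  have hxe : x = e ^ n := by
    by_contra hne
    have hlt : e ^ n < x := lt_of_le_of_ne hn1 (Ne.symm hne)
    have hu := aux_unit_mul hx (aux_unit_inv (aux_unit_pow he n))
    have h3 := hmin _ hu (by
      rw [← div_eq_mul_inv, one_lt_div hpos]; exact hlt)
    rw [← div_eq_mul_inv, le_div_iff₀ hpos] at h3
    rw [pow_succ] at hn2
    linarith
  rw [hxe]
  exact ⟨hpow n, hpow' n⟩

/-- If the ring of integers (maximal order) of a real quadratic field `K = ℚ(√D₀)` (with
`D₀ > 1` squarefree, the fundamental radicand) is unit-generated, then `K` is of narrow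
Richaud–Degert type: `D₀ = m² + r` for some `m ≥ 1` and `r ∈ {1, -1, 4, -4}`. -/
theorem maximal_unitGenerated_narrowRichaudDegert (K : Subfield ℝ)
    (hK : IsRealQuadratic K)
    (hug : IsUnitGenerated (ringOfIntegers K))
    (D₀ : ℤ) (hD₀ : 1 < D₀) (hsf : Squarefree D₀)
    (hKD : K = Subfield.closure {Real.sqrt D₀}) :
    ∃ m r : ℤ, 1 ≤ m ∧ (r = 1 ∨ r = -1 ∨ r = 4 ∨ r = -4) ∧ D₀ = m ^ 2 + r := by
  subst hKD
  have hirr := aux_irr hD₀ hsf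
  obtain ⟨t, u, hn, hall⟩ := aux_main hD₀ hsf hug
  have h4 : ¬ (4 : ℤ) ∣ D₀ := by
    intro h
    have := hsf 2 (by norm_num; exact h)
    rw [Int.isUnit_iff] at this
    omega
  by_cases hmod : D₀ % 4 = 1
  · obtain ⟨p, q, h⟩ := hall _ (aux_half_mem D₀ hD₀ (D₀ / 4) (by omega))
    have h1 : ((1 : ℤ) : ℝ) + ((1 : ℤ) : ℝ) * Real.sqrt D₀
        = ((2 * p + q * t : ℤ) : ℝ) + ((q * u : ℤ) : ℝ) * Real.sqrt D₀ := by
      push_cast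
      linear_combination 2 * h
    obtain ⟨-, e2⟩ := aux_uniq hirr h1
    have hu : u ^ 2 = 1 := by
      rcases Int.eq_one_or_neg_one_of_mul_eq_one' e2.symm with h | h <;> rw [h.2] <;> norm_num
    rw [hu, mul_one] at hn
    have ht : t ≠ 0 := by
      rintro rfl
      omega
    have habs := abs_pos.mpr ht
    rcases hn with h | h
    · exact ⟨|t|, -4, by omega, by simp, by rw [sq_abs]; omega⟩
    · exact ⟨|t|, 4, by omega, by simp, by rw [sq_abs]; omega⟩
  · obtain ⟨p, q, h⟩ := hall _ (aux_sqrt_mem D₀ hD₀)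
    have h1 : ((0 : ℤ) : ℝ) + ((2 : ℤ) : ℝ) * Real.sqrt D₀
        = ((2 * p + q * t : ℤ) : ℝ) + ((q * u : ℤ) : ℝ) * Real.sqrt D₀ := by
      push_cast
      linear_combination 2 * h
    obtain ⟨-, e2⟩ := aux_uniq hirr h1
    have hue : Even u := by
      by_contra hodd
      rw [Int.not_even_iff_odd] at hodd
      obtain ⟨k, rfl⟩ := hodd
      have h5 : ∃ l, t ^ 2 - D₀ = 4 * l := by
        rcases hn with h | h
        · exact ⟨1 + D₀ * (k ^ 2 + k), by linear_combination h⟩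
        · exact ⟨-1 + D₀ * (k ^ 2 + k), by linear_combination h⟩
      obtain ⟨l, hl⟩ := h5
      rcases Int.even_or_odd' t with ⟨j, rfl | rfl⟩
      · exact h4 ⟨j ^ 2 - l, by linear_combination -hl⟩
      · have : D₀ = 4 * (j ^ 2 + j - l) + 1 := by linear_combination -hl
        omega
    obtain ⟨v, rfl⟩ := hue
    have hv : v ^ 2 = 1 := by
      have : q * v = 1 := by linarith
      rcases Int.eq_one_or_neg_one_of_mul_eq_one' this with h | h <;> rw [h.2] <;> norm_num
    have hn' : t ^ 2 = 4 * D₀ + 4 ∨ t ^ 2 = 4 * D₀ - 4 := by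
      rcases hn with h | h
      · left; linear_combination h + 4 * D₀ * hv
      · right; linear_combination h + 4 * D₀ * hv
    have hte : Even t := by
      have : Even (t ^ 2) := by
        rcases hn' with h | h <;> rw [h]
        · exact ⟨2 * D₀ + 2, by ring⟩
        · exact ⟨2 * D₀ - 2, by ring⟩
      rw [Int.even_pow] at this
      exact this.1
    obtain ⟨w, rfl⟩ := hte
    have hw : w ≠ 0 := by
      rintro rfl
      norm_num at hn'
      omega
    have habs := abs_pos.mpr hw
    rcases hn' with h | h
    · exact ⟨|w|, -1, by omega, by simp, by rw [sq_abs]; linarith⟩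
    · exact ⟨|w|, 1, by omega, by simp, by rw [sq_abs]; linarith⟩
end
end

section
/- For every N > 0 there exists a constant C(N) > 0 with the following property. For every integer n ≥ 1 and every sign choice such that Δ = n² ∓ 4 is a positive nonsquare discriminant, write Δ = f²Δ₀ with Δ₀ the fundamental discriminant of ℚ(√Δ) and f ≥ 1 the conductor. If Δ₀ ≤ N, then |log h_Δ − log n| ≤ C(N) · log log(n + 20), where h_Δ is the class number of the quadratic order O_Δ. -/
noncomputable section

/-- A complex square root of an integer `d`. -/
def sqrtD (d : ℤ) : ℂ :=
  if 0 ≤ d then ((Real.sqrt d : ℝ) : ℂ) else Complex.I * ((Real.sqrt (-d) : ℝ) : ℂ)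

/-- The element `(Δ + √Δ)/2` generating the quadratic order of discriminant `Δ`. -/
def omegaD (d : ℤ) : ℂ := ((d : ℂ) + sqrtD d) / 2

/-- The quadratic order `O_Δ = ℤ[(Δ + √Δ)/2]` of discriminant `Δ`, as a subring of `ℂ`. -/
def QOrder (d : ℤ) : Subring ℂ := Subring.closure {omegaD d}

/-- The class number `h_Δ`: the order of the (wide) class group of `O_Δ`,
the group of invertible fractional ideals modulo principal fractional ideals. -/
def classNumber (d : ℤ) : ℕ := Nat.card (ClassGroup (QOrder d))

/-- `d` is a fundamental discriminant: the discriminant of the ring of integers of a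
quadratic field. -/
def IsFundamentalDiscriminant (d : ℤ) : Prop :=
  (d % 4 = 1 ∧ Squarefree d) ∨
    (d % 4 = 0 ∧ Squarefree (d / 4) ∧ (d / 4 % 4 = 2 ∨ d / 4 % 4 = 3))

/-- The invertible modules over the order `O`, all viewed as additive subgroups of `ℂ`. -/
def InvSet (O : Submodule ℤ ℂ) : Set (Submodule ℤ ℂ) :=
  {I | O * I = I ∧ ∃ J, O * J = J ∧ I * J = O}

/-- An `O`-stable subgroup as a submodule over the subring. -/
def toRMod (R : Subring ℂ) (O : Submodule ℤ ℂ) (h : ∀ z, z ∈ O ↔ z ∈ R) (I : Submodule ℤ ℂ)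
    (hI : O * I = I) : Submodule R ℂ where
  carrier := I
  add_mem' := I.add_mem
  zero_mem' := I.zero_mem
  smul_mem' := by
    intro c x hx
    have : (c : ℂ) * x ∈ O * I := Submodule.mul_mem_mul ((h c).2 c.2) hx
    rw [hI] at this
    exact this

lemma toRMod_mul (R : Subring ℂ) (O : Submodule ℤ ℂ) (h : ∀ z, z ∈ O ↔ z ∈ R)
    (I J K : Submodule ℤ ℂ) (hI : O * I = I) (hJ : O * J = J) (hK : O * K = K) (e : I * J = K) :
    toRMod R O h I hI * toRMod R O h J hJ = toRMod R O h K hK := by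
  apply Submodule.toAddSubmonoid_injective
  rw [Submodule.mul_toAddSubmonoid]
  have := congrArg Submodule.toAddSubmonoid e
  rw [Submodule.mul_toAddSubmonoid] at this
  exact this

lemma toRMod_one (R : Subring ℂ) (O : Submodule ℤ ℂ) (h : ∀ z, z ∈ O ↔ z ∈ R) (hO : O * O = O) :
    toRMod R O h O hO = 1 := by
  ext z
  rw [Submodule.mem_one]
  change z ∈ O ↔ _
  rw [h]
  constructor
  · intro hz
    exact ⟨⟨z, hz⟩, rfl⟩
  · rintro ⟨y, rfl⟩
    exact y.2

/-- Class map to the class group. -/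
lemma bridge (R : Subring ℂ) (O : Submodule ℤ ℂ) (h : ∀ z, z ∈ O ↔ z ∈ R) (hO : O * O = O) :
    ∃ c : InvSet O → ClassGroup R, Function.Surjective c ∧
      ∀ I J : InvSet O, c I = c J ↔ ∃ α : ℂ, α ≠ 0 ∧
        (I : Submodule ℤ ℂ) = Submodule.span ℤ {α} * (J : Submodule ℤ ℂ) := by
  have hu : ∀ I : InvSet O, ∃ u : (Submodule R ℂ)ˣ, (u : Submodule R ℂ) = toRMod R O h I I.2.1 := by
    rintro ⟨I, hI, J, hJ, hIJ⟩
    refine ⟨⟨toRMod R O h I hI, toRMod R O h J hJ, ?_, ?_⟩, rfl⟩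
    · rw [toRMod_mul R O h I J O hI hJ hO hIJ, toRMod_one]
    · rw [toRMod_mul R O h J I O hJ hI hO (by rw [mul_comm, hIJ]), toRMod_one]
  choose u hu using hu
  refine ⟨fun I => (ClassGroup.equivPic R).symm (Submodule.unitsToPic R ℂ (u I)), ?_, ?_⟩
  · intro x
    have hx : (ClassGroup.equivPic R) x ∈ (Submodule.unitsToPic R ℂ).range := by
      rw [Submodule.range_unitsToPic, CommRing.relPic_eq_top]
      trivial
    obtain ⟨v, hv⟩ := hx
    have key : ∀ M : Submodule R ℂ, O * (M.restrictScalars ℤ) = M.restrictScalars ℤ := by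
      intro M
      apply le_antisymm
      · rw [Submodule.mul_le]
        intro m hm n hn
        exact M.smul_mem ⟨m, (h m).1 hm⟩ hn
      · intro z hz
        have : (1 : ℂ) * z ∈ O * (M.restrictScalars ℤ) :=
          Submodule.mul_mem_mul ((h 1).2 R.one_mem) hz
        simpa using this
    have hv1 : (v.1).restrictScalars ℤ * (v.2).restrictScalars ℤ = O := by
      apply Submodule.toAddSubmonoid_injective
      rw [Submodule.mul_toAddSubmonoid]
      have h1 := congrArg Submodule.toAddSubmonoid v.3
      rw [Submodule.mul_toAddSubmonoid, ← toRMod_one R O h hO] at h1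
      exact h1
    let I : InvSet O := ⟨v.1.restrictScalars ℤ, key _, v.2.restrictScalars ℤ, key _, hv1⟩
    refine ⟨I, ?_⟩
    have : u I = v := by
      apply Units.ext
      rw [hu]
      rfl
    simp only [this, hv, MulEquiv.symm_apply_apply]
  · intro I J
    rw [EquivLike.apply_eq_iff_eq]
    have e1 : Submodule.unitsToPic R ℂ (u I) = Submodule.unitsToPic R ℂ (u J) ↔
        u I * (u J)⁻¹ ∈ (Submodule.unitsToPic R ℂ).ker := by
      rw [MonoidHom.mem_ker, map_mul, map_inv, mul_inv_eq_one]
    rw [e1, Submodule.ker_unitsToPic]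
    have e2 : ∀ α : ℂ, (I : Submodule ℤ ℂ) = Submodule.span ℤ {α} * (J : Submodule ℤ ℂ) ↔
        (u I : Submodule R ℂ) = Submodule.span R {α} * (u J : Submodule R ℂ) := by
      intro α
      rw [hu, hu, SetLike.ext_iff, SetLike.ext_iff]
      apply forall_congr'
      intro z
      rw [Submodule.mem_span_singleton_mul, Submodule.mem_span_singleton_mul]
      rfl
    constructor
    · rintro ⟨α, hα⟩
      refine ⟨α, α.ne_zero, ?_⟩
      rw [e2]
      have h3 : u I = (Units.map (Submodule.spanSingleton R).toMonoidHom) α * u J := by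
        rw [hα]; group
      rw [h3]
      rfl
    · rintro ⟨α, hα, hh⟩
      rw [e2] at hh
      refine ⟨Units.mk0 α hα, ?_⟩
      rw [eq_mul_inv_iff_mul_eq]
      apply Units.ext
      rw [hh]
      rfl


/-- `w` is a quadratic irrationality with trace `t` and norm `m`. -/
structure IsQ (w : ℂ) (t m : ℤ) : Prop where
  sq : w * w = t * w - m
  irr : ∀ x y : ℤ, (x : ℂ) + y * w = 0 → x = 0 ∧ y = 0

/-- The lattice `ℤ + g w ℤ`. -/
def latt (w : ℂ) (g : ℤ) : Submodule ℤ ℂ where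
  carrier := {z | ∃ x y : ℤ, z = x + g * (y * w)}
  add_mem' := by
    rintro _ _ ⟨x, y, rfl⟩ ⟨x', y', rfl⟩
    exact ⟨x + x', y + y', by push_cast; ring⟩
  zero_mem' := ⟨0, 0, by simp⟩
  smul_mem' := by
    rintro c _ ⟨x, y, rfl⟩
    exact ⟨c * x, c * y, by rw [zsmul_eq_mul]; push_cast; ring⟩

lemma mem_latt {w : ℂ} {g : ℤ} {z : ℂ} : z ∈ latt w g ↔ ∃ x y : ℤ, z = x + g * (y * w) := Iff.rfl

lemma mem_latt_one {w : ℂ} {z : ℂ} : z ∈ latt w 1 ↔ ∃ x y : ℤ, z = x + y * w := by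
  simp [mem_latt]

lemma int_mem_latt (w : ℂ) (g k : ℤ) : (k : ℂ) ∈ latt w g := ⟨k, 0, by simp⟩

lemma one_mem_latt (w : ℂ) (g : ℤ) : (1 : ℂ) ∈ latt w g := ⟨1, 0, by simp⟩

lemma mul_mem_latt {w : ℂ} {t m : ℤ} (hq : IsQ w t m) {g : ℤ} {a b : ℂ}
    (ha : a ∈ latt w g) (hb : b ∈ latt w g) : a * b ∈ latt w g := by
  obtain ⟨x, y, rfl⟩ := ha
  obtain ⟨x', y', rfl⟩ := hb
  refine ⟨x * x' - g * g * (y * y') * m, x * y' + x' * y + g * (y * y') * t, ?_⟩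
  push_cast
  linear_combination (g * g * y * y' : ℂ) * hq.sq

lemma latt_le (w : ℂ) (g : ℤ) : latt w g ≤ latt w 1 := by
  rintro _ ⟨x, y, rfl⟩
  exact ⟨x, g * y, by push_cast; ring⟩

lemma latt_of_mul {w : ℂ} {g : ℤ} {s : ℂ} (hs : s ∈ latt w 1) (k : ℤ) :
    (k : ℂ) + g * s ∈ latt w g := by
  obtain ⟨x, y, rfl⟩ := mem_latt_one.1 hs
  exact ⟨k + g * x, y, by push_cast; ring⟩

lemma latt_exists {w : ℂ} {g : ℤ} {z : ℂ} (hz : z ∈ latt w g) :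
    ∃ k : ℤ, ∃ s ∈ latt w 1, z = k + g * s := by
  obtain ⟨x, y, rfl⟩ := hz
  exact ⟨x, y * w, ⟨0, y, by simp⟩, rfl⟩

lemma latt_mul_mem {w : ℂ} {g : ℤ} {s : ℂ} (hs : s ∈ latt w 1) : g * s ∈ latt w g := by
  simpa using latt_of_mul (g := g) hs 0

lemma mul_eq_self_of {O I : Submodule ℤ ℂ} (h1 : (1 : ℂ) ∈ O)
    (h : ∀ a ∈ O, ∀ b ∈ I, a * b ∈ I) : O * I = I := by
  apply le_antisymm
  · rw [Submodule.mul_le]; exact h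
  · intro z hz
    simpa using Submodule.mul_mem_mul h1 hz

lemma latt_mul_self {w : ℂ} {t m : ℤ} (hq : IsQ w t m) (g : ℤ) : latt w g * latt w g = latt w g :=
  mul_eq_self_of (one_mem_latt w g) (fun _ ha _ hb => mul_mem_latt hq ha hb)

lemma latt_mul_one {w : ℂ} {t m : ℤ} (hq : IsQ w t m) (g : ℤ) : latt w g * latt w 1 = latt w 1 :=
  mul_eq_self_of (one_mem_latt w g) (fun _ ha _ hb => mul_mem_latt hq (latt_le w g ha) hb)

lemma span_mul_span_inv {α : ℂ} (hα : α ≠ 0) :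
    Submodule.span ℤ {α} * Submodule.span ℤ {α⁻¹} = (1 : Submodule ℤ ℂ) := by
  rw [Submodule.span_mul_span, Set.singleton_mul_singleton, mul_inv_cancel₀ hα,
    Submodule.one_eq_span]

lemma InvSet.scale {O I : Submodule ℤ ℂ} (hI : I ∈ InvSet O) {α : ℂ} (hα : α ≠ 0) :
    Submodule.span ℤ {α} * I ∈ InvSet O := by
  obtain ⟨h1, J, h2, h3⟩ := hI
  refine ⟨by rw [mul_left_comm, h1], Submodule.span ℤ {α⁻¹} * J, by rw [mul_left_comm, h2], ?_⟩
  rw [mul_mul_mul_comm, span_mul_span_inv hα, h3, one_mul]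

/-- An invertible module over the order of conductor `f` that generates the big order is
generated by one element modulo the conductor. -/
lemma exists_gen {w : ℂ} {t m : ℤ} (hq : IsQ w t m) {f : ℤ} (hf : f ≠ 0) {I : Submodule ℤ ℂ}
    (hI : I ∈ InvSet (latt w f)) (hS : latt w 1 * I = latt w 1) :
    ∃ a ∈ latt w 1, (∃ b ∈ latt w 1, ∃ k : ℤ, ∃ s ∈ latt w 1, a * b = k + f * s ∧ IsCoprime k f) ∧
      ∀ z, z ∈ I ↔ ∃ j : ℤ, ∃ s ∈ latt w 1, z = j * a + f * s := by
  obtain ⟨hRI, J, hRJ, hIJ⟩ := hI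
  have hSJ : latt w 1 * J = latt w 1 := by
    conv_lhs => rw [← hS]
    rw [mul_assoc, hIJ, mul_comm, latt_mul_one hq]
  have hle : ∀ {K : Submodule ℤ ℂ}, latt w 1 * K = latt w 1 → ∀ z ∈ K, z ∈ latt w 1 := by
    intro K hK z hz
    have := Submodule.mul_mem_mul (one_mem_latt w 1) hz
    rw [hK] at this
    simpa using this
  have hprod : ∀ a ∈ I, ∀ b ∈ J, ∃ k : ℤ, ∃ s ∈ latt w 1, a * b = k + f * s := by
    intro a ha b hb
    apply latt_exists
    rw [← hIJ]
    exact Submodule.mul_mem_mul ha hb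
  have hdvd : ∀ d : ℤ, d ∣ f → ∀ k : ℤ, ∀ s ∈ latt w 1, (k : ℂ) + f * s = 1 → d ∣ k → d ∣ 1 := by
    rintro d hd k s hs h hk
    obtain ⟨x, y, rfl⟩ := mem_latt_one.1 hs
    have := hq.irr (k + f * x - 1) (f * y) (by push_cast; linear_combination h)
    have h1 : (1 : ℤ) = k + f * x := by linarith [this.1]
    rw [h1]
    exact dvd_add hk (Dvd.dvd.mul_right hd x)
  have hone : ∀ p : ℤ, Prime p → p ∣ f → ∃ a ∈ I, ∃ b ∈ J, ∃ k : ℤ, ∃ s ∈ latt w 1,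
      a * b = k + f * s ∧ ¬ p ∣ k := by
    intro p hp hpf
    by_contra! hcon
    have : ∀ z ∈ I * J, ∃ k : ℤ, ∃ s ∈ latt w 1, z = k + f * s ∧ p ∣ k := by
      intro z hz
      induction hz using Submodule.mul_induction_on' with
      | mem_mul_mem a ha b hb =>
        obtain ⟨k, s, hs, e⟩ := hprod a ha b hb
        exact ⟨k, s, hs, e, hcon a ha b hb k s hs e⟩
      | add x hx y hy h1 h2 =>
        obtain ⟨k, s, hs, e, hk⟩ := h1
        obtain ⟨k', s', hs', e', hk'⟩ := h2
        exact ⟨k + k', s + s', add_mem hs hs', by rw [e, e']; push_cast; ring, dvd_add hk hk'⟩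
    obtain ⟨k, s, hs, e, hk⟩ := this 1 (by rw [hIJ]; exact one_mem_latt w f)
    exact hp.not_isUnit (isUnit_of_dvd_one (hdvd p hpf k s hs e.symm hk))
  have hmany : ∀ A : Finset ℕ, (∀ p ∈ A, p.Prime ∧ (p : ℤ) ∣ f) → ∃ a ∈ I, ∃ b ∈ J, ∃ k : ℤ,
      ∃ s ∈ latt w 1, a * b = k + f * s ∧ ∀ p ∈ A, ¬ (p : ℤ) ∣ k := by
    intro A
    induction A using Finset.induction_on with
    | empty =>
      intro _
      obtain ⟨k, s, hs, e⟩ := hprod 0 I.zero_mem 0 J.zero_mem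
      exact ⟨0, I.zero_mem, 0, J.zero_mem, k, s, hs, e, by simp⟩
    | insert p A hpA ih =>
      intro hA
      obtain ⟨a, ha, b, hb, k, s, hs, e, hk⟩ := ih (fun q hq' => hA q (Finset.mem_insert_of_mem hq'))
      obtain ⟨hp, hpf⟩ := hA p (Finset.mem_insert_self _ _)
      obtain ⟨a', ha', b', hb', k', s', hs', e', hk'⟩ := hone p (Nat.prime_iff_prime_int.1 hp) hpf
      obtain ⟨k1, s1, hs1, e1⟩ := hprod a ha b' hb'
      obtain ⟨k2, s2, hs2, e2⟩ := hprod a' ha' b hb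
      set E : ℤ := ∏ q ∈ A, (q : ℤ) with hE
      refine ⟨p • a + E • a', add_mem (nsmul_mem ha p) (zsmul_mem ha' E), p • b + E • b',
        add_mem (nsmul_mem hb p) (zsmul_mem hb' E),
        (p : ℤ) * p * k + p * E * (k1 + k2) + E * E * k',
        ((p : ℤ) * p) • s + ((p : ℤ) * E) • (s1 + s2) + (E * E) • s', ?_, ?_, ?_⟩
      · exact add_mem (add_mem (zsmul_mem hs _) (zsmul_mem (add_mem hs1 hs2) _)) (zsmul_mem hs' _)
      · simp only [zsmul_eq_mul, nsmul_eq_mul]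
        push_cast
        linear_combination (p : ℂ) * p * e + p * E * e1 + p * E * e2 + E * E * e'
      · intro q hq'
        rw [Finset.mem_insert] at hq'
        rcases hq' with rfl | hqA
        · intro hd
          have h3 : (q : ℤ) ∣ E * E * k' := by
            have : (q : ℤ) ∣ q * (q * k + E * (k1 + k2)) := dvd_mul_right _ _
            have h4 := dvd_sub hd this
            have h5 : (q : ℤ) * q * k + q * E * (k1 + k2) + E * E * k' -
              q * (q * k + E * (k1 + k2)) = E * E * k' := by ring
            rwa [h5] at h4
          have hqp := Nat.prime_iff_prime_int.1 hp
          have hEn : ¬ (q : ℤ) ∣ E := by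
            intro h5
            rw [hE, hqp.dvd_finsetProd_iff] at h5
            obtain ⟨r, hr, hqr⟩ := h5
            have hr' := (hA r (Finset.mem_insert_of_mem hr)).1
            have : q = r := (Nat.prime_dvd_prime_iff_eq hp hr').1 (by exact_mod_cast hqr)
            exact hpA (this ▸ hr)
          rcases hqp.dvd_or_dvd h3 with h5 | h5
          · rcases hqp.dvd_or_dvd h5 with h6 | h6 <;> exact hEn h6
          · exact hk' h5
        · intro hd
          have hq0 := (hA q (Finset.mem_insert_of_mem hqA)).1
          have hqp := Nat.prime_iff_prime_int.1 hq0
          have hqE : (q : ℤ) ∣ E := Finset.dvd_prod_of_mem (fun q : ℕ => (q : ℤ)) hqA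
          have h3 : (q : ℤ) ∣ p * p * k := by
            have : (q : ℤ) ∣ E * (p * (k1 + k2) + E * k') := Dvd.dvd.mul_right hqE _
            have h4 := dvd_sub hd this
            have h5 : (p : ℤ) * p * k + p * E * (k1 + k2) + E * E * k' -
              E * (p * (k1 + k2) + E * k') = p * p * k := by ring
            rwa [h5] at h4
          have hpn : ¬ (q : ℤ) ∣ p := by
            intro h5
            have : q = p := (Nat.prime_dvd_prime_iff_eq hq0 hp).1 (by exact_mod_cast h5)
            exact hpA (this ▸ hqA)
          rcases hqp.dvd_or_dvd h3 with h5 | h5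
          · rcases hqp.dvd_or_dvd h5 with h6 | h6 <;> exact hpn h6
          · exact hk q hqA h5
  obtain ⟨a, ha, b, hb, k, s, hs, e, hk⟩ := hmany f.natAbs.primeFactors (by
    intro p hp
    rw [Nat.mem_primeFactors] at hp
    exact ⟨hp.1, Int.natCast_dvd.2 hp.2.1⟩)
  have hcop : IsCoprime k f := by
    rw [Int.isCoprime_iff_gcd_eq_one]
    by_contra hg
    obtain ⟨p, hp, hpd⟩ := Nat.exists_prime_and_dvd hg
    have h1 : (p : ℤ) ∣ k := (Int.natCast_dvd_natCast.2 hpd).trans (Int.gcd_dvd_left _ _)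
    have h2 : (p : ℤ) ∣ f := (Int.natCast_dvd_natCast.2 hpd).trans (Int.gcd_dvd_right _ _)
    refine hk p ?_ h1
    rw [Nat.mem_primeFactors]
    exact ⟨hp, Int.natCast_dvd.1 h2, by simpa using hf⟩
  have haS := hle hS a ha
  have hbS := hle hSJ b hb
  refine ⟨a, haS, ⟨b, hbS, k, s, hs, e, hcop⟩, ?_⟩
  have hfS : ∀ s ∈ latt w 1, f * s ∈ I := by
    intro s hs
    rw [← hS] at hs
    induction hs using Submodule.mul_induction_on' with
    | mem_mul_mem x hx y hy =>
      have := Submodule.mul_mem_mul (latt_mul_mem (g := f) hx) hy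
      rw [hRI] at this
      rwa [mul_assoc] at this
    | add x hx y hy h1 h2 =>
      rw [mul_add]; exact add_mem h1 h2
  intro z
  constructor
  · intro hz
    obtain ⟨k', s', hs', e'⟩ := hprod z hz b hb
    obtain ⟨u, v, huv⟩ := hcop
    have hzS := hle hS z hz
    refine ⟨u * k', u • (s' * a - z * s) + v • z, ?_, ?_⟩
    · exact add_mem (zsmul_mem (sub_mem (mul_mem_latt hq hs' haS) (mul_mem_latt hq hzS hs)) _)
        (zsmul_mem hzS _)
    · have huv' : (u : ℂ) * k + v * f = 1 := by exact_mod_cast huv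
      simp only [zsmul_eq_mul]
      push_cast
      linear_combination (-z) * huv' + (u : ℂ) * a * e' - u * z * e
  · rintro ⟨j, s, hs, rfl⟩
    rw [← zsmul_eq_mul]
    exact add_mem (zsmul_mem ha j) (hfS s hs)

/-- A system of residues for the modules generating the big order. -/
lemma exists_residue {w : ℂ} {t m : ℤ} (hq : IsQ w t m) {f : ℕ} (hf : f ≠ 0) :
    ∃ g : Submodule ℤ ℂ → ZMod f × ZMod f,
      ∀ L L' : Submodule ℤ ℂ, L ∈ InvSet (latt w f) → latt w 1 * L = latt w 1 →
        L' ∈ InvSet (latt w f) → latt w 1 * L' = latt w 1 → ∀ c c' : (ZMod f)ˣ,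
        (c : ZMod f) • g L = (c' : ZMod f) • g L' → L = L' ∧ c = c' := by
  have hf' : (f : ℤ) ≠ 0 := by exact_mod_cast hf
  have H : ∀ L : Submodule ℤ ℂ, ∃ xy : ℤ × ℤ, L ∈ InvSet (latt w f) → latt w 1 * L = latt w 1 →
      ((∃ b ∈ latt w 1, ∃ k : ℤ, ∃ s ∈ latt w 1, ((xy.1 : ℂ) + xy.2 * w) * b = k + (f : ℤ) * s ∧
        IsCoprime k (f : ℤ)) ∧
      ∀ z, z ∈ L ↔ ∃ j : ℤ, ∃ s ∈ latt w 1, z = j * ((xy.1 : ℂ) + xy.2 * w) + (f : ℤ) * s) := by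
    intro L
    by_cases h : L ∈ InvSet (latt w f) ∧ latt w 1 * L = latt w 1
    · obtain ⟨a, ha, h1, h2⟩ := exists_gen hq hf' h.1 h.2
      obtain ⟨x, y, rfl⟩ := mem_latt_one.1 ha
      exact ⟨(x, y), fun _ _ => ⟨h1, h2⟩⟩
    · exact ⟨0, fun h1 h2 => absurd ⟨h1, h2⟩ h⟩
  choose xy hxy using H
  have hunit : ∀ c : (ZMod f)ˣ, ∃ d e : ℤ, (d : ZMod f) = c ∧ ∃ q : ℤ, e * d = 1 + f * q := by
    intro c
    obtain ⟨d, hd⟩ := ZMod.intCast_surjective (c : ZMod f)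
    obtain ⟨e, he⟩ := ZMod.intCast_surjective ((c⁻¹ : (ZMod f)ˣ) : ZMod f)
    refine ⟨d, e, hd, ?_⟩
    have : ((e * d - 1 : ℤ) : ZMod f) = 0 := by
      push_cast
      rw [hd, he]
      simp
    rw [ZMod.intCast_zmod_eq_zero_iff_dvd] at this
    obtain ⟨q, hq⟩ := this
    exact ⟨q, by linarith⟩
  have hle : ∀ L L' : Submodule ℤ ℂ, L ∈ InvSet (latt w f) → latt w 1 * L = latt w 1 →
        L' ∈ InvSet (latt w f) → latt w 1 * L' = latt w 1 → ∀ c c' : (ZMod f)ˣ,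
        (c : ZMod f) * (xy L).1 = c' * (xy L').1 → (c : ZMod f) * (xy L).2 = c' * (xy L').2 →
        L ≤ L' := by
    intro L L' h1 h2 h3 h4 c c' e1 e2
    obtain ⟨d, e, hd, q, hq'⟩ := hunit c
    obtain ⟨d', -, hd', -⟩ := hunit c'
    rw [← hd, ← hd'] at e1 e2
    have e1' : ((d * (xy L).1 : ℤ) : ZMod f) = ((d' * (xy L').1 : ℤ) : ZMod f) := by
      push_cast; exact e1
    have e2' : ((d * (xy L).2 : ℤ) : ZMod f) = ((d' * (xy L').2 : ℤ) : ZMod f) := by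
      push_cast; exact e2
    rw [ZMod.intCast_eq_intCast_iff_dvd_sub] at e1' e2'
    obtain ⟨r1, hr1⟩ := e1'
    obtain ⟨r2, hr2⟩ := e2'
    intro z hz
    rw [(hxy L h1 h2).2] at hz
    rw [(hxy L' h3 h4).2]
    obtain ⟨j, s, hs, rfl⟩ := hz
    refine ⟨j * e * d', s - (j * e) • ((r1 : ℂ) + r2 * w) - (j * q) • (((xy L).1 : ℂ) + (xy L).2 * w),
      ?_, ?_⟩
    · exact sub_mem (sub_mem hs (zsmul_mem (mem_latt_one.2 ⟨_, _, rfl⟩) _))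
        (zsmul_mem (mem_latt_one.2 ⟨_, _, rfl⟩) _)
    · have hr1' : (d' : ℂ) * (xy L').1 - d * (xy L).1 = (f : ℤ) * r1 := by exact_mod_cast hr1
      have hr2' : (d' : ℂ) * (xy L').2 - d * (xy L).2 = (f : ℤ) * r2 := by exact_mod_cast hr2
      have hq'' : (e : ℂ) * d = 1 + (f : ℤ) * q := by exact_mod_cast hq'
      simp only [zsmul_eq_mul]
      push_cast at hr1' hr2' hq'' ⊢
      linear_combination (-(j : ℂ)) * (((xy L).1 : ℂ) + (xy L).2 * w) * hq'' - j * e * hr1'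
        - j * e * w * hr2'
  refine ⟨fun L => (((xy L).1 : ZMod f), ((xy L).2 : ZMod f)), ?_⟩
  intro L L' h1 h2 h3 h4 c c' e
  simp only [Prod.smul_mk, smul_eq_mul, Prod.mk.injEq] at e
  have hLL : L = L' := le_antisymm (hle L L' h1 h2 h3 h4 c c' e.1 e.2)
    (hle L' L h3 h4 h1 h2 c' c e.1.symm e.2.symm)
  refine ⟨hLL, ?_⟩
  subst hLL
  obtain ⟨⟨b, hb, k, s, hs, hab, hcop⟩, -⟩ := hxy L h1 h2
  obtain ⟨d, -, hd, -⟩ := hunit c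
  obtain ⟨d', -, hd', -⟩ := hunit c'
  rw [← hd, ← hd'] at e
  obtain ⟨e1, e2⟩ := e
  have e1' : ((d * (xy L).1 : ℤ) : ZMod f) = ((d' * (xy L).1 : ℤ) : ZMod f) := by
    push_cast; exact e1
  have e2' : ((d * (xy L).2 : ℤ) : ZMod f) = ((d' * (xy L).2 : ℤ) : ZMod f) := by
    push_cast; exact e2
  rw [ZMod.intCast_eq_intCast_iff_dvd_sub] at e1' e2'
  obtain ⟨r1, hr1⟩ := e1'
  obtain ⟨r2, hr2⟩ := e2'
  apply Units.ext
  rw [← hd, ← hd', ZMod.intCast_eq_intCast_iff_dvd_sub]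
  have hmem : ((r1 : ℂ) + r2 * w) * b - (d' - d) * s ∈ latt w 1 := by
    have := sub_mem (mul_mem_latt hq (mem_latt_one.2 ⟨r1, r2, rfl⟩) hb) (zsmul_mem hs (d' - d))
    simpa [zsmul_eq_mul] using this
  obtain ⟨X, Y, hXY⟩ := mem_latt_one.1 hmem
  have hr1' : (d' : ℂ) * (xy L).1 - d * (xy L).1 = (f : ℤ) * r1 := by exact_mod_cast hr1
  have hr2' : (d' : ℂ) * (xy L).2 - d * (xy L).2 = (f : ℤ) * r2 := by exact_mod_cast hr2
  have := hq.irr ((d' - d) * k - f * X) (-(f * Y)) (by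
    push_cast at *
    linear_combination (-(f : ℂ)) * (-hXY) - (d' - d : ℂ) * hab + b * hr1' + b * w * hr2')
  have h5 : (f : ℤ) ∣ (d' - d) * k := ⟨X, by linarith [this.1]⟩
  exact hcop.symm.dvd_of_dvd_mul_right h5


lemma exists_approx_ideal (A : Type) [CommRing A] [IsDomain A] (bA : Module.Basis (Fin 2) ℤ A) :
    ∃ M : ℤ, M ≠ 0 ∧ ∀ I : Ideal A, I ≠ ⊥ → ∃ b ∈ I, b ≠ 0 ∧ ∀ a ∈ I, b ∣ M • a := by
  have : Module.Finite ℤ A := Module.Finite.of_basis bA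
  have : Algebra.IsAlgebraic ℤ A := by
    have : Algebra.IsIntegral ℤ A := inferInstance
    have : FaithfulSMul ℤ A :=
      (faithfulSMul_iff_algebraMap_injective ℤ A).2 bA.algebraMap_injective
    exact Algebra.IsIntegral.isAlgebraic
  refine ⟨∏ r ∈ ClassGroup.finsetApprox bA AbsoluteValue.absIsAdmissible, r, ?_, ?_⟩
  · rw [Finset.prod_ne_zero_iff]
    intro r hr h0
    rw [h0] at hr
    exact ClassGroup.finsetApprox.zero_notMem _ _ hr
  · intro I hI
    obtain ⟨b, hbI, hb0, hmin⟩ := ClassGroup.exists_min (R := ℤ) AbsoluteValue.abs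
      (⟨I, mem_nonZeroDivisors_of_ne_zero hI⟩ : nonZeroDivisors (Ideal A))
    refine ⟨b, hbI, hb0, ?_⟩
    intro a ha
    obtain ⟨q, r, hr, hlt⟩ := ClassGroup.exists_mem_finset_approx' bA
      AbsoluteValue.absIsAdmissible a hb0
    have h1 := hmin (r • a - q * b) (I.sub_mem (zsmul_mem ha r) (I.mul_mem_left q hbI)) hlt
    have h2 : r • a = q * b := sub_eq_zero.1 h1
    obtain ⟨c, hc⟩ := Finset.dvd_prod_of_mem (fun r : ℤ => r) hr
    rw [hc, mul_comm, mul_smul, h2]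
    exact ⟨c • q, by rw [mul_smul_comm, mul_comm]⟩

lemma finite_between (w : ℂ) (M : ℕ) (hM : M ≠ 0) :
    {J : Submodule ℤ ℂ | (∀ s ∈ latt w 1, (M : ℂ) * s ∈ J) ∧ J ≤ latt w 1}.Finite := by
  have : NeZero M := ⟨hM⟩
  let φ : Submodule ℤ ℂ → Set (ZMod M × ZMod M) :=
    fun J => {z | ((z.1.val : ℂ) + (z.2.val : ℂ) * w) ∈ J}
  have key : ∀ J : Submodule ℤ ℂ, (∀ s ∈ latt w 1, (M : ℂ) * s ∈ J) → ∀ x y : ℤ,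
      ((x : ℂ) + y * w ∈ J ↔ ((x : ZMod M), (y : ZMod M)) ∈ φ J) := by
    intro J hJ x y
    have hx : (((x : ZMod M).val : ℤ)) = x - M * (x / M) := by
      rw [ZMod.val_intCast, Int.emod_def]
    have hy : (((y : ZMod M).val : ℤ)) = y - M * (y / M) := by
      rw [ZMod.val_intCast, Int.emod_def]
    have hx' : ((x : ZMod M).val : ℂ) = x - M * ((x / M : ℤ) : ℂ) := by exact_mod_cast hx
    have hy' : ((y : ZMod M).val : ℂ) = y - M * ((y / M : ℤ) : ℂ) := by exact_mod_cast hy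
    have h1 := hJ (((x / M : ℤ) : ℂ) + ((y / M : ℤ) : ℂ) * w) (mem_latt_one.2 ⟨_, _, rfl⟩)
    change _ ↔ (((x : ZMod M).val : ℂ) + ((y : ZMod M).val : ℂ) * w) ∈ J
    have h2 : (((x : ZMod M).val : ℂ) + ((y : ZMod M).val : ℂ) * w) =
        (x + y * w) - M * (((x / M : ℤ) : ℂ) + ((y / M : ℤ) : ℂ) * w) := by
      rw [hx', hy']; ring
    rw [h2]
    exact (J.sub_mem_iff_left h1).symm
  apply Set.Finite.of_finite_image (f := φ) (Set.toFinite _)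
  rintro J ⟨hJ1, hJ2⟩ J' ⟨hJ1', hJ2'⟩ h
  ext z
  constructor
  · intro hz
    obtain ⟨x, y, rfl⟩ := mem_latt_one.1 (hJ2 hz)
    rw [key J' hJ1', ← h, ← key J hJ1]
    exact hz
  · intro hz
    obtain ⟨x, y, rfl⟩ := mem_latt_one.1 (hJ2' hz)
    rw [key J hJ1, h, ← key J' hJ1']
    exact hz

lemma exists_finite_reps {w : ℂ} {t m : ℤ} (hq : IsQ w t m) :
    ∃ T : Finset (Submodule ℤ ℂ), ∀ J ∈ InvSet (latt w 1),
      ∃ α : ℂ, α ≠ 0 ∧ Submodule.span ℤ {α} * J ∈ T := by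
  let A := QuadraticAlgebra ℤ (-m) t
  let φ : A →ₐ[ℤ] ℂ := QuadraticAlgebra.lift ⟨w, by
    rw [hq.sq]; simp [zsmul_eq_mul]; ring⟩
  have hφ : ∀ z : A, φ z = z.re + z.im * w := by
    intro z
    change z.re • (1 : ℂ) + z.im • w = _
    simp [zsmul_eq_mul]
  have hinj : Function.Injective φ := by
    rw [injective_iff_map_eq_zero]
    intro z hz
    rw [hφ] at hz
    obtain ⟨h1, h2⟩ := hq.irr _ _ hz
    exact QuadraticAlgebra.ext h1 h2
  have hmem : ∀ z : ℂ, z ∈ latt w 1 ↔ ∃ a : A, φ a = z := by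
    intro z
    rw [mem_latt_one]
    constructor
    · rintro ⟨x, y, rfl⟩
      exact ⟨⟨x, y⟩, hφ _⟩
    · rintro ⟨a, rfl⟩
      exact ⟨a.re, a.im, hφ a⟩
  have : IsDomain A := Function.Injective.isDomain φ.toRingHom hinj
  obtain ⟨M, hM0, hM⟩ := exists_approx_ideal A (QuadraticAlgebra.basis (-m) t)
  have hfin := finite_between w M.natAbs (by simpa using hM0)
  refine ⟨hfin.toFinset, ?_⟩
  rintro J ⟨hSJ, J', hSJ', hJJ'⟩
  obtain ⟨β, hβ, hβ0⟩ : ∃ β ∈ J', β ≠ 0 := by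
    by_contra! h
    have h0 : J' = ⊥ := by
      rw [Submodule.eq_bot_iff]; exact h
    rw [h0, Submodule.mul_bot] at hJJ'
    have := one_mem_latt w 1
    rw [← hJJ'] at this
    simp at this
  have hβJ : ∀ z ∈ J, β * z ∈ latt w 1 := by
    intro z hz
    have h := Submodule.mul_mem_mul hz hβ
    rw [hJJ'] at h
    rwa [mul_comm] at h
  have hSmul : ∀ s ∈ latt w 1, ∀ z ∈ J, s * z ∈ J := by
    intro s hs z hz
    rw [← hSJ]
    exact Submodule.mul_mem_mul hs hz
  let I : Ideal A :=
    { carrier := {a | β⁻¹ * φ a ∈ J}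
      add_mem' := by
        intro a b ha hb
        change β⁻¹ * φ (a + b) ∈ J
        rw [map_add, mul_add]
        exact add_mem ha hb
      zero_mem' := by
        change β⁻¹ * φ 0 ∈ J
        simp
      smul_mem' := by
        intro c a ha
        change β⁻¹ * φ (c * a) ∈ J
        rw [map_mul, mul_left_comm]
        exact hSmul _ ((hmem _).2 ⟨c, rfl⟩) _ ha }
  have hImem : ∀ a : A, a ∈ I ↔ β⁻¹ * φ a ∈ J := fun a => Iff.rfl
  have hI0 : I ≠ ⊥ := by
    intro h
    have hJ0 : J = ⊥ := by
      rw [Submodule.eq_bot_iff]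
      intro z hz
      obtain ⟨a, ha⟩ := (hmem _).1 (hβJ z hz)
      have : a ∈ I := by rw [hImem, ha, inv_mul_cancel_left₀ hβ0]; exact hz
      rw [h] at this
      rw [Ideal.mem_bot.1 this, map_zero] at ha
      rcases mul_eq_zero.1 ha.symm with h1 | h1
      · exact absurd h1 hβ0
      · exact h1
    rw [hJ0, Submodule.bot_mul] at hJJ'
    have := one_mem_latt w 1
    rw [← hJJ'] at this
    simp at this
  obtain ⟨b, hbI, hb0, hb⟩ := hM I hI0
  have hφb : φ b ≠ 0 := by
    intro h
    exact hb0 (hinj (by rw [h, map_zero]))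
  have hMC : (M : ℂ) ≠ 0 := by exact_mod_cast hM0
  refine ⟨M * β / φ b, by positivity, ?_⟩
  rw [Set.Finite.mem_toFinset]
  constructor
  · intro s hs
    rw [Submodule.mem_span_singleton_mul]
    have h1 : s * (β⁻¹ * φ b) ∈ J := hSmul s hs _ ((hImem b).1 hbI)
    have h2 : M * β / φ b * (s * (β⁻¹ * φ b)) = M * s := by field_simp
    rcases Int.natAbs_eq M with h | h
    · refine ⟨_, h1, ?_⟩
      rw [h2]
      conv_lhs => rw [h]
      simp
    · refine ⟨_, neg_mem h1, ?_⟩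
      rw [mul_neg, h2]
      conv_lhs => rw [h]
      simp
  · intro z hz
    rw [Submodule.mem_span_singleton_mul] at hz
    obtain ⟨y, hy, rfl⟩ := hz
    obtain ⟨a, ha⟩ := (hmem _).1 (hβJ y hy)
    have haI : a ∈ I := by rw [hImem, ha, inv_mul_cancel_left₀ hβ0]; exact hy
    obtain ⟨c, hc⟩ := hb a haI
    rw [hmem]
    refine ⟨c, ?_⟩
    have h3 : φ (M • a) = φ (b * c) := by rw [hc]
    rw [map_zsmul, map_mul, ha, zsmul_eq_mul] at h3
    rw [eq_comm, div_mul_eq_mul_div, div_eq_iff hφb]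
    linear_combination h3


lemma upper_bound {w : ℂ} {t m : ℤ} (hq : IsQ w t m) (T : Finset (Submodule ℤ ℂ))
    (hT : ∀ J ∈ InvSet (latt w 1), ∃ α : ℂ, α ≠ 0 ∧ Submodule.span ℤ {α} * J ∈ T)
    {f : ℕ} (hf : f ≠ 0) (R : Subring ℂ) (hR : ∀ z, z ∈ latt w f ↔ z ∈ R) :
    Finite (ClassGroup R) ∧ Nat.card (ClassGroup R) * f.totient ≤ T.card * f ^ 2 := by
  have : NeZero f := ⟨hf⟩
  obtain ⟨c, hcs, hc⟩ := bridge R (latt w f) hR (latt_mul_self hq f)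
  obtain ⟨g, hg⟩ := exists_residue hq hf
  have hext : ∀ I ∈ InvSet (latt w f), latt w 1 * I ∈ InvSet (latt w 1) := by
    rintro I ⟨h1, J, h2, h3⟩
    refine ⟨by rw [← mul_assoc, latt_mul_self hq], latt w 1 * J,
      by rw [← mul_assoc, latt_mul_self hq], ?_⟩
    rw [mul_mul_mul_comm, h3, latt_mul_self hq, mul_comm, latt_mul_one hq]
  have hrep : ∀ x : ClassGroup R, ∃ I : InvSet (latt w f), c I = x ∧ latt w 1 * I ∈ T := by
    intro x
    obtain ⟨I, rfl⟩ := hcs x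
    obtain ⟨α, hα, hαT⟩ := hT _ (hext I I.2)
    refine ⟨⟨Submodule.span ℤ {α} * I, InvSet.scale I.2 hα⟩, ?_, ?_⟩
    · rw [hc]
      exact ⟨α, hα, rfl⟩
    · change latt w 1 * (Submodule.span ℤ {α} * I) ∈ T
      rwa [mul_left_comm]
  choose I hIc hIT using hrep
  have hinv : ∀ tt : Submodule ℤ ℂ, ∃ K : Submodule ℤ ℂ, ∃ K', (∃ x, latt w 1 * (I x) = tt) →
      latt w 1 * K = tt ∧ latt w f * K = K ∧ latt w f * K' = K' ∧ K * K' = latt w f := by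
    intro tt
    by_cases h : ∃ x, latt w 1 * (I x : Submodule ℤ ℂ) = tt
    · obtain ⟨x, hx⟩ := h
      obtain ⟨h1, J, h2, h3⟩ := (I x).2
      exact ⟨I x, J, fun _ => ⟨hx, h1, h2, h3⟩⟩
    · exact ⟨0, 0, fun h' => absurd h' h⟩
  choose K K' hK using hinv
  let L : ClassGroup R → Submodule ℤ ℂ := fun x => I x * K' (latt w 1 * I x)
  have hL : ∀ x, L x ∈ InvSet (latt w f) ∧ latt w 1 * L x = latt w 1 ∧
      L x * K (latt w 1 * I x) = I x := by
    intro x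
    obtain ⟨h1, h2, h3, h4⟩ := hK (latt w 1 * I x) ⟨x, rfl⟩
    obtain ⟨h5, J, h6, h7⟩ := (I x).2
    refine ⟨⟨?_, J * K (latt w 1 * I x), ?_, ?_⟩, ?_, ?_⟩
    · rw [← mul_assoc, h5]
    · rw [← mul_assoc, h6]
    · change I x * K' (latt w 1 * I x) * (J * K (latt w 1 * I x)) = _
      rw [mul_mul_mul_comm, h7, mul_comm (K' _), h4, latt_mul_self hq]
    · change latt w 1 * (I x * K' (latt w 1 * I x)) = _
      rw [← mul_assoc]
      conv_lhs => rw [← h1]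
      rw [h1, ← h1, mul_assoc, h1, h4, mul_comm, latt_mul_one hq]
    · change I x * K' (latt w 1 * I x) * K (latt w 1 * I x) = I x
      rw [mul_assoc, mul_comm (K' _), h4, mul_comm, h5]
  let F : ClassGroup R × (ZMod f)ˣ → T × (ZMod f × ZMod f) :=
    fun p => (⟨latt w 1 * I p.1, hIT p.1⟩, (p.2 : ZMod f) • g (L p.1))
  have hF : Function.Injective F := by
    rintro ⟨x, u⟩ ⟨x', u'⟩ h
    simp only [F, Prod.mk.injEq, Subtype.mk.injEq] at h
    obtain ⟨h1, h2⟩ := h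
    obtain ⟨e1, e2⟩ := hg (L x) (L x') (hL x).1 (hL x).2.1 (hL x').1 (hL x').2.1 u u' h2
    have h3 : (I x : Submodule ℤ ℂ) = I x' := by
      rw [← (hL x).2.2, ← (hL x').2.2, e1, h1]
    have h4 : I x = I x' := Subtype.ext h3
    have h5 : x = x' := by rw [← hIc x, ← hIc x', h4]
    rw [h5, e2]
  have hfin : Finite (ClassGroup R × (ZMod f)ˣ) := Finite.of_injective F hF
  have hfin2 : Finite (ClassGroup R) := Finite.of_injective (fun x => ((x, 1) : ClassGroup R × (ZMod f)ˣ))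
    (fun a b h => (Prod.mk.inj h).1)
  refine ⟨hfin2, ?_⟩
  have := Nat.card_le_card_of_injective F hF
  rw [Nat.card_prod, Nat.card_prod, Nat.card_prod, Nat.card_eq_fintype_card (α := (ZMod f)ˣ),
    ZMod.card_units_eq_totient, Nat.card_zmod] at this
  simpa [sq] using this


/-- Norm form. -/
def nmf {A : Type*} [CommRing A] (t m : ℤ) (x y : A) : A := x * x + t * x * y + m * (y * y)

/-- Pairs of residues with invertible norm. -/
def GoodPairs (t m : ℤ) (f : ℕ) : Type := {z : ZMod f × ZMod f // IsUnit (nmf t m z.1 z.2)}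

lemma goodPairs_finite (t m : ℤ) (f : ℕ) [NeZero f] : Finite (GoodPairs t m f) := by
  unfold GoodPairs; infer_instance

lemma good_prime (t m : ℤ) (p : ℕ) (hp : p.Prime) : (p - 1) ^ 2 ≤ Nat.card (GoodPairs t m p) := by
  classical
  have : Fact p.Prime := ⟨hp⟩
  let Z : Finset (ZMod p × ZMod p) := Finset.univ.filter (fun z => ¬ IsUnit (nmf t m z.1 z.2))
  have hcard : Nat.card (GoodPairs t m p) + Z.card = p * p := by
    have h1 : Nat.card (GoodPairs t m p) =
        (Finset.univ.filter (fun z : ZMod p × ZMod p => IsUnit (nmf t m z.1 z.2))).card := by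
      unfold GoodPairs
      rw [Nat.card_eq_fintype_card, Fintype.card_subtype]
    rw [h1, Finset.card_filter_add_card_filter_not]
    simp [ZMod.card]
  have hZ : Z.card ≤ p + (p - 1) := by
    by_cases hr : ∃ r : ZMod p, r * r + t * r + m = 0
    · obtain ⟨r, hr⟩ := hr
      have hsub : Z ⊆ (Finset.univ.image (fun y : ZMod p => (r * y, y))) ∪
          ((Finset.univ.erase 0).image (fun y : ZMod p => ((-t - r) * y, y))) := by
        rintro ⟨x, y⟩ hz
        simp only [Z, Finset.mem_filter, Finset.mem_univ, true_and, isUnit_iff_ne_zero, ne_eq,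
          not_not, nmf] at hz
        have hz' : (x - r * y) * (x - (-t - r) * y) = 0 := by
          linear_combination hz - y * y * hr
        simp only [Finset.mem_union, Finset.mem_image, Finset.mem_univ, true_and, Finset.mem_erase,
          Prod.mk.injEq]
        rcases mul_eq_zero.1 hz' with h | h
        · left; exact ⟨y, (sub_eq_zero.1 h).symm, rfl⟩
        · by_cases hy : y = 0
          · left
            refine ⟨0, ?_, hy.symm⟩
            rw [hy] at h
            simpa using h.symm
          · right; exact ⟨y, ⟨hy, trivial⟩, (sub_eq_zero.1 h).symm, rfl⟩
      refine (Finset.card_le_card hsub).trans ((Finset.card_union_le _ _).trans ?_)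
      apply add_le_add
      · refine Finset.card_image_le.trans ?_
        simp [ZMod.card]
      · refine Finset.card_image_le.trans ?_
        rw [Finset.card_erase_of_mem (Finset.mem_univ _)]
        simp [ZMod.card]
    · have hsub : Z ⊆ {(0, 0)} := by
        rintro ⟨x, y⟩ hz
        simp only [Z, Finset.mem_filter, Finset.mem_univ, true_and, isUnit_iff_ne_zero, ne_eq,
          not_not, nmf] at hz
        rw [Finset.mem_singleton]
        by_cases hy : y = 0
        · subst hy
          have : x = 0 := by simpa using hz
          rw [this]
        · exfalso
          apply hr
          refine ⟨x / y, ?_⟩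
          field_simp
          linear_combination hz
      have h1 := Finset.card_le_card hsub
      rw [Finset.card_singleton] at h1
      have := hp.two_le
      omega
  obtain ⟨q, rfl⟩ : ∃ q, p = q + 1 := ⟨p - 1, by have := hp.pos; omega⟩
  simp only [Nat.add_sub_cancel] at *
  nlinarith

lemma good_prime_pow (t m : ℤ) (p k : ℕ) (hp : p.Prime) :
    Nat.card (GoodPairs t m p) * (p ^ k) ^ 2 ≤ Nat.card (GoodPairs t m (p ^ (k + 1))) := by
  have : NeZero p := ⟨hp.ne_zero⟩
  have : NeZero (p ^ (k + 1)) := ⟨pow_ne_zero _ hp.ne_zero⟩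
  have := goodPairs_finite t m (p ^ (k + 1))
  let X : ZMod p → Fin (p ^ k) → ℕ := fun x i => x.val + p * i
  have hXlt : ∀ x i, X x i < p ^ (k + 1) := by
    intro x i
    have h1 := ZMod.val_lt x
    have h2 := i.2
    have h3 : p * (i.1 + 1) ≤ p * p ^ k := Nat.mul_le_mul_left p h2
    simp only [X]
    rw [pow_succ']
    linarith
  have hXinj : ∀ x i x' i', ((X x i : ℕ) : ZMod (p ^ (k + 1))) = ((X x' i' : ℕ) : ZMod (p ^ (k + 1))) →
      x = x' ∧ i = i' := by
    intro x i x' i' h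
    have h1 : X x i = X x' i' := by
      rw [ZMod.natCast_eq_natCast_iff'] at h
      rwa [Nat.mod_eq_of_lt (hXlt x i), Nat.mod_eq_of_lt (hXlt x' i')] at h
    have h2 : x.val = x'.val := by
      have := congrArg (· % p) h1
      simpa [X, Nat.mod_eq_of_lt (ZMod.val_lt _)] using this
    refine ⟨ZMod.val_injective p h2, ?_⟩
    simp only [X, h2, Nat.add_left_cancel_iff] at h1
    exact Fin.ext (Nat.eq_of_mul_eq_mul_left hp.pos h1)
  have hunit : ∀ x y i j, IsUnit (nmf t m x y) →
      IsUnit (nmf t m ((X x i : ℕ) : ZMod (p ^ (k + 1))) ((X y j : ℕ) : ZMod (p ^ (k + 1)))) := by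
    intro x y i j h
    have e1 : nmf t m ((X x i : ℕ) : ZMod (p ^ (k + 1))) ((X y j : ℕ) : ZMod (p ^ (k + 1))) =
        ((nmf t m (X x i : ℤ) (X y j : ℤ) : ℤ) : ZMod (p ^ (k + 1))) := by
      simp [nmf]
    have e2 : nmf t m x y = ((nmf t m (X x i : ℤ) (X y j : ℤ) : ℤ) : ZMod p) := by
      simp [nmf, X]
    rw [e2, ZMod.coe_int_isUnit_iff_isCoprime] at h
    rw [e1, ZMod.coe_int_isUnit_iff_isCoprime]
    push_cast
    exact h.pow_left
  let F : GoodPairs t m p × (Fin (p ^ k) × Fin (p ^ k)) → GoodPairs t m (p ^ (k + 1)) :=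
    fun z => ⟨(((X z.1.1.1 z.2.1 : ℕ) : ZMod (p ^ (k + 1))), ((X z.1.1.2 z.2.2 : ℕ) : ZMod (p ^ (k + 1)))),
      hunit _ _ _ _ z.1.2⟩
  have hF : Function.Injective F := by
    rintro ⟨⟨⟨x, y⟩, h⟩, i, j⟩ ⟨⟨⟨x', y'⟩, h'⟩, i', j'⟩ e
    have e' := congrArg Subtype.val e
    simp only [F, Prod.mk.injEq] at e'
    obtain ⟨h1, h2⟩ := hXinj _ _ _ _ e'.1
    obtain ⟨h3, h4⟩ := hXinj _ _ _ _ e'.2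
    subst h1 h2 h3 h4
    rfl
  have := Nat.card_le_card_of_injective F hF
  simpa [Nat.card_prod, sq] using this

lemma good_mul (t m : ℤ) (a b : ℕ) (ha : a ≠ 0) (hb : b ≠ 0) (hab : a.Coprime b) :
    Nat.card (GoodPairs t m a) * Nat.card (GoodPairs t m b) ≤ Nat.card (GoodPairs t m (a * b)) := by
  have : NeZero (a * b) := ⟨mul_ne_zero ha hb⟩
  have := goodPairs_finite t m (a * b)
  let e := (ZMod.chineseRemainder hab).symm
  have hunit : ∀ (x y : ZMod a) (x' y' : ZMod b), IsUnit (nmf t m x y) → IsUnit (nmf t m x' y') →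
      IsUnit (nmf t m (e (x, x')) (e (y, y'))) := by
    intro x y x' y' h h'
    have h1 : nmf t m (e (x, x')) (e (y, y')) = e (nmf t m x y, nmf t m x' y') := by
      have h2 : ((nmf t m x y, nmf t m x' y') : ZMod a × ZMod b) = nmf t m (x, x') (y, y') := by
        simp [nmf, Prod.ext_iff]
      rw [h2]
      simp only [nmf, map_add, map_mul, map_intCast]
    rw [h1]
    exact (Prod.isUnit_iff.2 ⟨h, h'⟩).map e
  let F : GoodPairs t m a × GoodPairs t m b → GoodPairs t m (a * b) :=
    fun z => ⟨(e (z.1.1.1, z.2.1.1), e (z.1.1.2, z.2.1.2)), hunit _ _ _ _ z.1.2 z.2.2⟩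
  have hF : Function.Injective F := by
    rintro ⟨⟨⟨x, y⟩, h⟩, ⟨x', y'⟩, h'⟩ ⟨⟨⟨u, v⟩, g⟩, ⟨u', v'⟩, g'⟩ e'
    have e'' := congrArg Subtype.val e'
    simp only [F, Prod.mk.injEq, EmbeddingLike.apply_eq_iff_eq] at e''
    obtain ⟨⟨h1, h2⟩, h3, h4⟩ := e''
    subst h1 h2 h3 h4
    rfl
  have := Nat.card_le_card_of_injective F hF
  rwa [Nat.card_prod] at this

lemma good_card (t m : ℤ) (f : ℕ) (hf : f ≠ 0) : f.totient ^ 2 ≤ Nat.card (GoodPairs t m f) := by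
  induction f using Nat.recOnPosPrimePosCoprime with
  | prime_pow p n hp hn =>
    obtain ⟨k, rfl⟩ : ∃ k, n = k + 1 := ⟨n - 1, by omega⟩
    refine le_trans ?_ (good_prime_pow t m p k hp)
    rw [Nat.totient_prime_pow_succ hp, mul_pow, mul_comm]
    exact Nat.mul_le_mul_right _ (good_prime t m p hp)
  | zero => exact absurd rfl hf
  | one =>
    have := goodPairs_finite t m 1
    have : Nonempty (GoodPairs t m 1) := ⟨⟨(0, 0), isUnit_of_subsingleton _⟩⟩
    rw [Nat.totient_one, one_pow]
    exact Nat.card_pos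
  | coprime a b ha hb hab iha ihb =>
    refine le_trans ?_ (good_mul t m a b (by omega) (by omega) hab)
    rw [Nat.totient_mul hab, mul_pow]
    exact Nat.mul_le_mul (iha (by omega)) (ihb (by omega))

lemma prod_one_sub_inv (A : Finset ℕ) (hA : ∀ p ∈ A, 2 ≤ p) :
    (1 : ℚ) / (A.card + 1) ≤ ∏ p ∈ A, (1 - (p : ℚ)⁻¹) := by
  induction A using Finset.induction_on_max with
  | empty => simp
  | insert a A hlt ih =>
    have hna : a ∉ A := fun h => lt_irrefl _ (hlt a h)
    have ih' := ih (fun p hp => hA p (Finset.mem_insert_of_mem hp))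
    rw [Finset.prod_insert hna, Finset.card_insert_of_notMem hna]
    have hsub : A ⊆ Finset.Ico 2 a := by
      intro p hp
      rw [Finset.mem_Ico]
      exact ⟨hA p (Finset.mem_insert_of_mem hp), hlt p hp⟩
    have hc := Finset.card_le_card hsub
    rw [Nat.card_Ico] at hc
    have ha2 := hA a (Finset.mem_insert_self _ _)
    have hac : (A.card : ℚ) + 2 ≤ a := by
      have : A.card + 2 ≤ a := by omega
      exact_mod_cast this
    have h1 : ((A.card : ℚ) + 1) / (A.card + 2) ≤ 1 - (a : ℚ)⁻¹ := by
      have h2 : (a : ℚ)⁻¹ ≤ ((A.card : ℚ) + 2)⁻¹ := inv_anti₀ (by positivity) hac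
      have h3 : ((A.card : ℚ) + 1) / (A.card + 2) = 1 - ((A.card : ℚ) + 2)⁻¹ := by
        field_simp; ring
      rw [h3]; linarith
    calc (1 : ℚ) / ((A.card + 1 : ℕ) + 1) = (((A.card : ℚ) + 1) / (A.card + 2)) * (1 / (A.card + 1)) := by
          push_cast; field_simp; ring
      _ ≤ _ := mul_le_mul h1 ih' (by positivity) (le_trans (by positivity) h1)

lemma totient_lower (f : ℕ) (hf : f ≠ 0) : f ≤ f.totient * (Nat.log 2 f + 1) := by
  have h1 := Nat.totient_eq_mul_prod_factors f
  have h2 := prod_one_sub_inv f.primeFactors (fun p hp => (Nat.prime_of_mem_primeFactors hp).two_le)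
  have h3 : f.primeFactors.card ≤ Nat.log 2 f := by
    apply Nat.le_log_of_pow_le (by norm_num)
    calc 2 ^ f.primeFactors.card ≤ ∏ p ∈ f.primeFactors, p :=
          Finset.pow_card_le_prod _ _ _ (fun p hp => (Nat.prime_of_mem_primeFactors hp).two_le)
      _ ≤ f := Nat.le_of_dvd (Nat.pos_of_ne_zero hf) (Nat.prod_primeFactors_dvd f)
  have h4 : (f : ℚ) ≤ f.totient * (f.primeFactors.card + 1) := by
    rw [h1]
    have h5 : (1 : ℚ) ≤ (∏ p ∈ f.primeFactors, (1 - (p : ℚ)⁻¹)) * (f.primeFactors.card + 1) := by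
      rw [div_le_iff₀ (by positivity)] at h2
      exact h2
    rw [mul_assoc]
    exact le_mul_of_one_le_right (by positivity) h5
  have h6 : f ≤ f.totient * (f.primeFactors.card + 1) := by exact_mod_cast h4
  exact h6.trans (Nat.mul_le_mul_left _ (by omega))



/-- The module `ℤ a + f S`. -/
def genMod (w : ℂ) (f : ℤ) (a : ℂ) : Submodule ℤ ℂ where
  carrier := {z | ∃ j : ℤ, ∃ s ∈ latt w 1, z = j * a + f * s}
  add_mem' := by
    rintro _ _ ⟨j, s, hs, rfl⟩ ⟨j', s', hs', rfl⟩
    exact ⟨j + j', s + s', add_mem hs hs', by push_cast; ring⟩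
  zero_mem' := ⟨0, 0, zero_mem _, by simp⟩
  smul_mem' := by
    rintro c _ ⟨j, s, hs, rfl⟩
    exact ⟨c * j, c • s, zsmul_mem hs c, by simp only [zsmul_eq_mul]; push_cast; ring⟩

lemma mem_genMod {w : ℂ} {f : ℤ} {a z : ℂ} :
    z ∈ genMod w f a ↔ ∃ j : ℤ, ∃ s ∈ latt w 1, z = j * a + f * s := Iff.rfl

lemma self_mem_genMod (w : ℂ) (f : ℤ) (a : ℂ) : a ∈ genMod w f a :=
  ⟨1, 0, zero_mem _, by simp⟩

lemma mul_mem_genMod {w : ℂ} {f : ℤ} {a s : ℂ} (hs : s ∈ latt w 1) : f * s ∈ genMod w f a :=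
  ⟨0, s, hs, by simp⟩

lemma int_mul_mem {w : ℂ} {g : ℤ} {s : ℂ} (k : ℤ) (hs : s ∈ latt w g) : (k : ℂ) * s ∈ latt w g := by
  rw [← zsmul_eq_mul]; exact zsmul_mem hs k

lemma genMod_stable {w : ℂ} {t m : ℤ} (hq : IsQ w t m) (f : ℤ) {a : ℂ} (ha : a ∈ latt w 1) :
    latt w f * genMod w f a = genMod w f a := by
  apply mul_eq_self_of (one_mem_latt w f)
  rintro z hz _ ⟨j, s, hs, rfl⟩
  obtain ⟨k, s', hs', rfl⟩ := latt_exists hz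
  refine ⟨k * j, k * s + j * (s' * a) + f * (s' * s), ?_, by push_cast; ring⟩
  exact add_mem (add_mem (int_mul_mem _ hs) (int_mul_mem _ (mul_mem_latt hq hs' ha)))
    (int_mul_mem _ (mul_mem_latt hq hs' hs))

lemma genMod_inv {w : ℂ} {t m : ℤ} (hq : IsQ w t m) (f : ℤ) {a b c : ℂ} (ha : a ∈ latt w 1)
    (hb : b ∈ latt w 1) (hc : c ∈ latt w 1) (e : a * b = 1 + f * c) :
    genMod w f a * genMod w f b = latt w f := by
  apply le_antisymm
  · rw [Submodule.mul_le]
    rintro _ ⟨j, s, hs, rfl⟩ _ ⟨j', s', hs', rfl⟩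
    have h := latt_of_mul (g := f) (k := j * j')
      (s := (j * j' : ℤ) * c + j * (a * s') + j' * (s * b) + f * (s * s'))
      (add_mem (add_mem (add_mem (int_mul_mem _ hc) (int_mul_mem _ (mul_mem_latt hq ha hs')))
        (int_mul_mem _ (mul_mem_latt hq hs hb))) (int_mul_mem _ (mul_mem_latt hq hs hs')))
    convert h using 1
    push_cast
    linear_combination (j * j' : ℂ) * e
  · have h1 : ∀ s ∈ latt w 1, f * s ∈ genMod w f a * genMod w f b := by
      intro s hs
      have h2 : (f : ℂ) * s = (f * (s * a)) * b - (f * s) * (f * c) := by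
        linear_combination (-(f : ℂ) * s) * e
      rw [h2]
      exact sub_mem (Submodule.mul_mem_mul (mul_mem_genMod (mul_mem_latt hq hs ha))
        (self_mem_genMod _ _ _)) (Submodule.mul_mem_mul (mul_mem_genMod hs) (mul_mem_genMod hc))
    have h3 : (1 : ℂ) ∈ genMod w f a * genMod w f b := by
      have h2 : (1 : ℂ) = a * b - f * c := by linear_combination -e
      rw [h2]
      exact sub_mem (Submodule.mul_mem_mul (self_mem_genMod _ _ _) (self_mem_genMod _ _ _)) (h1 c hc)
    intro z hz
    obtain ⟨k, s, hs, rfl⟩ := latt_exists hz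
    refine add_mem ?_ (h1 s hs)
    have := zsmul_mem h3 k
    rwa [zsmul_eq_mul, mul_one] at this

lemma genMod_full {w : ℂ} {t m : ℤ} (hq : IsQ w t m) (f : ℤ) {a b c : ℂ} (ha : a ∈ latt w 1)
    (hb : b ∈ latt w 1) (hc : c ∈ latt w 1) (e : a * b = 1 + f * c) :
    latt w 1 * genMod w f a = latt w 1 := by
  apply le_antisymm
  · rw [Submodule.mul_le]
    rintro z hz _ ⟨j, s, hs, rfl⟩
    exact mul_mem_latt hq hz (add_mem (int_mul_mem _ ha) (int_mul_mem _ hs))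
  · intro s hs
    have h2 : s = (s * b) * a - s * (f * c) := by linear_combination (-s) * e
    rw [h2]
    exact sub_mem (Submodule.mul_mem_mul (mul_mem_latt hq hs hb) (self_mem_genMod _ _ _))
      (Submodule.mul_mem_mul hs (mul_mem_genMod hc))

lemma exists_inverse {w : ℂ} {t m : ℤ} (hq : IsQ w t m) {f : ℕ} {x y : ℤ}
    (h : IsUnit (nmf t m (x : ZMod f) (y : ZMod f))) :
    ∃ b ∈ latt w 1, ∃ c ∈ latt w 1, ((x : ℂ) + y * w) * b = 1 + (f : ℤ) * c := by
  have e1 : nmf t m (x : ZMod f) (y : ZMod f) = ((nmf t m x y : ℤ) : ZMod f) := by simp [nmf]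
  rw [e1, ZMod.coe_int_isUnit_iff_isCoprime] at h
  obtain ⟨u, v, huv⟩ := h
  refine ⟨v * ((x : ℂ) + y * (t - w)), ?_, (-u : ℤ), int_mem_latt _ _ _, ?_⟩
  · exact mem_latt_one.2 ⟨v * (x + y * t), -(v * y), by push_cast; ring⟩
  · have h2 : (u : ℂ) * f + v * (x * x + t * x * y + m * (y * y)) = 1 := by
      have := congrArg (Int.cast : ℤ → ℂ) huv
      simpa [nmf] using this
    push_cast
    linear_combination h2 - (v : ℂ) * y * y * hq.sq

/-- Multiplication of coordinates. -/
def mulPair (t m : ℤ) {A : Type*} [CommRing A] (u : ℤ × ℤ) (z : A × A) : A × A :=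
  (u.1 * z.1 - u.2 * z.2 * m, u.1 * z.2 + u.2 * z.1 + u.2 * z.2 * t)

lemma span_unit_mul {w : ℂ} {f : ℤ} {η : ℂ} (h0 : η ≠ 0) (h1 : η ∈ latt w f) (h2 : η⁻¹ ∈ latt w f)
    {I : Submodule ℤ ℂ} (hI : latt w f * I = I) : Submodule.span ℤ {η} * I = I := by
  have h : ∀ z ∈ latt w f, Submodule.span ℤ {z} * I ≤ I := by
    intro z hz
    conv_rhs => rw [← hI]
    refine mul_le_mul' ?_ le_rfl
    rw [Submodule.span_le]
    simpa using hz
  apply le_antisymm (h η h1)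
  calc I = Submodule.span ℤ {η} * (Submodule.span ℤ {η⁻¹} * I) := by
        rw [← mul_assoc, span_mul_span_inv h0, one_mul]
    _ ≤ _ := mul_le_mul' le_rfl (h _ h2)

lemma same_class {w : ℂ} {t m : ℤ} (hq : IsQ w t m) {f : ℕ} {U : Finset (ℤ × ℤ)}
    (hU : ∀ α : ℂ, α ≠ 0 → α ∈ latt w 1 → α⁻¹ ∈ latt w 1 → ∃ u ∈ U, ∃ η : ℂ, η ≠ 0 ∧
      η ∈ latt w f ∧ η⁻¹ ∈ latt w f ∧ α = η * (u.1 + u.2 * w)) {x y x' y' : ℤ}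
    (h : IsUnit (nmf t m (x : ZMod f) (y : ZMod f)))
    (h' : IsUnit (nmf t m (x' : ZMod f) (y' : ZMod f))) {α : ℂ} (hα : α ≠ 0)
    (e : genMod w f ((x : ℂ) + y * w) = Submodule.span ℤ {α} * genMod w f ((x' : ℂ) + y' * w)) :
    ∃ u ∈ U, ∃ k : (ZMod f)ˣ, ((x : ZMod f), (y : ZMod f)) =
      (k : ZMod f) • mulPair t m u ((x' : ZMod f), (y' : ZMod f)) := by
  have hS : ∀ x y : ℤ, (x : ℂ) + y * w ∈ latt w 1 := fun x y => mem_latt_one.2 ⟨x, y, rfl⟩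
  obtain ⟨b, hb, c, hc, hbc⟩ := exists_inverse hq h
  obtain ⟨b', hb', c', hc', hbc'⟩ := exists_inverse hq h'
  have f1 := genMod_full hq f (hS x y) hb hc hbc
  have f2 := genMod_full hq f (hS x' y') hb' hc' hbc'
  have e1 : latt w 1 = Submodule.span ℤ {α} * latt w 1 := by
    rw [e, mul_left_comm, f2] at f1
    exact f1.symm
  have hα1 : α ∈ latt w 1 := by
    rw [e1, Submodule.mem_span_singleton_mul]
    exact ⟨1, one_mem_latt _ _, mul_one _⟩
  have hα2 : α⁻¹ ∈ latt w 1 := by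
    have := one_mem_latt w 1
    rw [e1, Submodule.mem_span_singleton_mul] at this
    obtain ⟨z, hz, hz'⟩ := this
    rwa [inv_eq_of_mul_eq_one_right hz']
  obtain ⟨u, huU, η, h0, h1, h2, rfl⟩ := hU α hα hα1 hα2
  refine ⟨u, huU, ?_⟩
  rw [← Set.singleton_mul_singleton, ← Submodule.span_mul_span, mul_comm (Submodule.span ℤ {η}),
    mul_assoc, span_unit_mul h0 h1 h2 (genMod_stable hq f (hS x' y'))] at e
  have hmem := self_mem_genMod w f ((x : ℂ) + y * w)
  rw [e, Submodule.mem_span_singleton_mul] at hmem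
  obtain ⟨z, ⟨k, s, hs, rfl⟩, hz⟩ := hmem
  obtain ⟨p, q, hpq⟩ := mem_latt_one.1 (mul_mem_latt hq (hS u.1 u.2) hs)
  have := hq.irr (x - k * (mulPair t m u (x', y')).1 - f * p)
    (y - k * (mulPair t m u (x', y')).2 - f * q) (by
      simp only [mulPair]
      push_cast
      simp only [Int.cast_natCast] at *
      linear_combination -hz + (k : ℂ) * u.2 * y' * hq.sq + (f : ℂ) * hpq)
  have e1 : (x : ZMod f) = k * (mulPair t m u ((x' : ZMod f), (y' : ZMod f))).1 := by
    have := congrArg (Int.cast : ℤ → ZMod f) this.1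
    simp [mulPair] at this ⊢
    linear_combination this
  have e2 : (y : ZMod f) = k * (mulPair t m u ((x' : ZMod f), (y' : ZMod f))).2 := by
    have := congrArg (Int.cast : ℤ → ZMod f) this.2
    simp [mulPair] at this ⊢
    linear_combination this
  have hk : IsUnit (k : ZMod f) := by
    rw [e1, e2] at h
    refine isUnit_of_dvd_unit ?_ h
    unfold nmf
    refine ⟨k * nmf t m (mulPair t m u ((x' : ZMod f), (y' : ZMod f))).1
      (mulPair t m u ((x' : ZMod f), (y' : ZMod f))).2, ?_⟩
    unfold nmf
    ring
  refine ⟨hk.unit, ?_⟩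
  rw [IsUnit.unit_spec]
  exact Prod.ext e1 e2

lemma lower_bound {w : ℂ} {t m : ℤ} (hq : IsQ w t m) {f : ℕ} (hf : f ≠ 0) (U : Finset (ℤ × ℤ))
    (hU : ∀ α : ℂ, α ≠ 0 → α ∈ latt w 1 → α⁻¹ ∈ latt w 1 → ∃ u ∈ U, ∃ η : ℂ, η ≠ 0 ∧
      η ∈ latt w f ∧ η⁻¹ ∈ latt w f ∧ α = η * (u.1 + u.2 * w))
    (R : Subring ℂ) (hR : ∀ z, z ∈ latt w f ↔ z ∈ R) (hfin : Finite (ClassGroup R)) :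
    f.totient ≤ Nat.card (ClassGroup R) * U.card := by
  have : NeZero f := ⟨hf⟩
  have := goodPairs_finite t m f
  obtain ⟨c, hcs, hc⟩ := bridge R (latt w f) hR (latt_mul_self hq f)
  let X : ZMod f → ℤ := fun x => x.val
  have hX : ∀ x : ZMod f, ((X x : ℤ) : ZMod f) = x := by intro x; simp [X]
  have hS : ∀ x y : ℤ, (x : ℂ) + y * w ∈ latt w 1 := fun x y => mem_latt_one.2 ⟨x, y, rfl⟩
  let gm : GoodPairs t m f → Submodule ℤ ℂ := fun p => genMod w f ((X p.1.1 : ℂ) + X p.1.2 * w)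
  have hun : ∀ p : GoodPairs t m f, IsUnit (nmf t m ((X p.1.1 : ℤ) : ZMod f) ((X p.1.2 : ℤ) : ZMod f)) := by
    intro p; rw [hX, hX]; exact p.2
  have hgm : ∀ p, gm p ∈ InvSet (latt w f) := by
    intro p
    obtain ⟨b, hb, c, hc, hbc⟩ := exists_inverse hq (hun p)
    exact ⟨genMod_stable hq f (hS _ _), genMod w f b, genMod_stable hq f hb,
      genMod_inv hq f (hS _ _) hb hc hbc⟩
  let cl : GoodPairs t m f → ClassGroup R := fun p => c ⟨gm p, hgm p⟩
  have hbase : ∀ x : ClassGroup R, ∃ p : ZMod f × ZMod f, (∃ q, cl q = x) →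
      ∃ h, cl ⟨p, h⟩ = x := by
    intro x
    by_cases h : ∃ q, cl q = x
    · obtain ⟨q, hq'⟩ := h
      exact ⟨q.1, fun _ => ⟨q.2, hq'⟩⟩
    · exact ⟨0, fun h' => absurd h' h⟩
  choose P hP using hbase
  have hkey : ∀ p : GoodPairs t m f, ∃ u : U, ∃ k : (ZMod f)ˣ,
      p.1 = (k : ZMod f) • mulPair t m u.1 (P (cl p)) := by
    intro p
    obtain ⟨h, hh⟩ := hP (cl p) ⟨p, rfl⟩
    obtain ⟨α, hα, e⟩ := (hc _ _).1 hh.symm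
    obtain ⟨u, hu, k, hk⟩ := same_class hq hU (hun p) (hun ⟨P (cl p), h⟩) hα e
    refine ⟨⟨u, hu⟩, k, ?_⟩
    simp only [hX] at hk
    exact hk
  choose u k hk using hkey
  let F : GoodPairs t m f → (ClassGroup R × U) × (ZMod f)ˣ := fun p => ((cl p, u p), k p)
  have hF : Function.Injective F := by
    intro p p' h
    simp only [F, Prod.mk.injEq] at h
    obtain ⟨⟨h1, h2⟩, h3⟩ := h
    apply Subtype.ext
    rw [hk p, hk p', h1, h2, h3]
  have h1 := Nat.card_le_card_of_injective F hF
  rw [Nat.card_prod, Nat.card_prod, Nat.card_eq_fintype_card (α := (ZMod f)ˣ),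
    ZMod.card_units_eq_totient] at h1
  have h2 := (good_card t m f hf).trans h1
  have h3 : 0 < f.totient := Nat.totient_pos.2 (Nat.pos_of_ne_zero hf)
  rw [sq] at h2
  simpa using Nat.le_of_mul_le_mul_right h2 h3


lemma latt_zpow {w : ℂ} {t m : ℤ} (hq : IsQ w t m) {g : ℤ} {z : ℂ} (h1 : z ∈ latt w g)
    (h2 : z⁻¹ ∈ latt w g) (n : ℤ) : z ^ n ∈ latt w g := by
  have hp : ∀ v ∈ latt w g, ∀ k : ℕ, v ^ k ∈ latt w g := by
    intro v hv k
    induction k with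
    | zero => simpa using one_mem_latt w g
    | succ k ih => rw [pow_succ]; exact mul_mem_latt hq ih hv
  obtain ⟨k, rfl | rfl⟩ := Int.eq_nat_or_neg n
  · simpa using hp z h1 k
  · simpa using hp _ h2 k

lemma unit_norm {w : ℂ} {t m : ℤ} (hq : IsQ w t m) {x y x' y' : ℤ}
    (h : ((x : ℂ) + y * w) * (x' + y' * w) = 1) : nmf t m x y = 1 ∨ nmf t m x y = -1 := by
  have h1 := hq.irr (x * x' - y * y' * m - 1) (x * y' + y * x' + y * y' * t) (by
    push_cast
    linear_combination h - (y : ℂ) * y' * hq.sq)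
  apply Int.eq_one_or_neg_one_of_mul_eq_one (v := nmf t m x' y')
  have e1 : x * x' - y * y' * m = 1 := by linarith [h1.1]
  have e2 : nmf t m x y * nmf t m x' y' = (x * x' - y * y' * m) ^ 2 +
      t * (x * x' - y * y' * m) * (x * y' + y * x' + y * y' * t) +
      m * (x * y' + y * x' + y * y' * t) ^ 2 := by
    unfold nmf; simp only [Int.cast_id]; ring
  rw [e2, e1, h1.2]; ring

lemma unit_gap {r : ℝ} {t m : ℤ} (hq : IsQ (r : ℂ) t m) {v : ℝ} (hv : 1 < v)
    (h1 : (v : ℂ) ∈ latt r 1) (h2 : (v : ℂ)⁻¹ ∈ latt r 1) : 3 / 2 ≤ v := by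
  obtain ⟨x, y, hxy⟩ := mem_latt_one.1 h1
  obtain ⟨x', y', hxy'⟩ := mem_latt_one.1 h2
  have hv0 : (v : ℂ) ≠ 0 := by exact_mod_cast (by linarith : v ≠ 0)
  have hn := unit_norm hq (x := x) (y := y) (x' := x') (y' := y')
    (by rw [← hxy, ← hxy', mul_inv_cancel₀ hv0])
  have hvr : v = x + y * r := by exact_mod_cast hxy
  have hr : r * r = t * r - m := by exact_mod_cast hq.sq
  set c : ℝ := x + y * (t - r) with hc
  have hvc : v * c = (nmf t m x y : ℤ) := by
    rw [hvr, hc]; unfold nmf; push_cast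
    linear_combination (-(y : ℝ) * y) * hr
  have hsum : v + c = ((2 * x + t * y : ℤ) : ℝ) := by rw [hvr, hc]; push_cast; ring
  rcases hn with hn | hn
  · rw [hn] at hvc
    push_cast at hvc
    have hcpos : 0 < c := by nlinarith
    have hc1 : c < 1 := by nlinarith
    have h2 : (2 : ℝ) < v + c := by nlinarith [sq_nonneg (v - c), sq_nonneg (v - 1)]
    rw [hsum] at h2
    have h3 : (3 : ℤ) ≤ 2 * x + t * y := by
      have : (2 : ℤ) < 2 * x + t * y := by exact_mod_cast h2
      omega
    have h4 : (3 : ℝ) ≤ v + c := by rw [hsum]; exact_mod_cast h3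
    linarith
  · rw [hn] at hvc
    push_cast at hvc
    have hcneg : c < 0 := by nlinarith
    have hc1 : -1 < c := by nlinarith
    have h2 : (0 : ℝ) < v + c := by linarith
    rw [hsum] at h2
    have h3 : (1 : ℤ) ≤ 2 * x + t * y := by
      have : (0 : ℤ) < 2 * x + t * y := by exact_mod_cast h2
      omega
    have h4 : (1 : ℝ) ≤ v + c := by rw [hsum]; exact_mod_cast h3
    nlinarith

lemma exists_units {r : ℝ} {t m : ℤ} (hq : IsQ (r : ℂ) t m) {f : ℤ} {ε : ℝ} (hε : 1 < ε)
    (h1 : (ε : ℂ) ∈ latt r f) (h2 : (ε : ℂ)⁻¹ ∈ latt r f) :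
    ∃ U : Finset (ℤ × ℤ), (U.card : ℝ) ≤ Real.log ε / Real.log (3 / 2) + 1 ∧
      ∀ α : ℂ, α ≠ 0 → α ∈ latt r 1 → α⁻¹ ∈ latt r 1 → ∃ u ∈ U, ∃ η : ℂ, η ≠ 0 ∧
      η ∈ latt r f ∧ η⁻¹ ∈ latt r f ∧ α = η * (u.1 + u.2 * (r : ℂ)) := by
  let val : ℤ × ℤ → ℝ := fun u => u.1 + u.2 * r
  have hval : ∀ u, (val u : ℂ) = u.1 + u.2 * (r : ℂ) := by intro u; simp [val]
  let Us : Set (ℤ × ℤ) := {u | ((val u : ℝ) : ℂ)⁻¹ ∈ latt r 1 ∧ 1 ≤ val u ∧ val u < ε}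
  have hmem : ∀ u, (val u : ℂ) ∈ latt r 1 := fun u => mem_latt_one.2 ⟨u.1, u.2, hval u⟩
  have hinjv : ∀ u u', val u = val u' → u = u' := by
    intro u u' h
    have := hq.irr (u.1 - u'.1) (u.2 - u'.2) (by
      have h' : (val u : ℂ) = val u' := by rw [h]
      rw [hval, hval] at h'
      push_cast
      linear_combination h')
    exact Prod.ext (by linarith [this.1]) (by linarith [this.2])
  have hl : 0 < Real.log (3 / 2) := Real.log_pos (by norm_num)
  let g : ℤ × ℤ → ℕ := fun u => ⌊Real.log (val u) / Real.log (3 / 2)⌋₊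
  have hlt : ∀ u ∈ Us, ∀ u' ∈ Us, val u < val u' → g u < g u' := by
    rintro u ⟨i1, i2, i3⟩ u' ⟨j1, j2, j3⟩ h
    have hpos : 0 < val u := by linarith
    have hu0 : (val u : ℂ) ≠ 0 := by exact_mod_cast hpos.ne'
    have k1 : 1 < val u' / val u := by rw [lt_div_iff₀ hpos]; linarith
    have k2 : 3 / 2 ≤ val u' / val u := by
      apply unit_gap hq k1
      · push_cast; rw [div_eq_mul_inv]; exact mul_mem_latt hq (hmem u') i1
      · push_cast; rw [inv_div, div_eq_mul_inv]; exact mul_mem_latt hq (hmem u) j1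
    have k3 : val u * (3 / 2) ≤ val u' := by rw [le_div_iff₀ hpos] at k2; linarith
    have k4 : Real.log (val u) + Real.log (3 / 2) ≤ Real.log (val u') := by
      rw [← Real.log_mul hpos.ne' (by norm_num)]
      exact Real.log_le_log (by positivity) k3
    have k5 : Real.log (val u) / Real.log (3 / 2) + 1 ≤ Real.log (val u') / Real.log (3 / 2) := by
      rw [div_add_one hl.ne']
      exact div_le_div_of_nonneg_right k4 hl.le
    have k6 : 0 ≤ Real.log (val u) / Real.log (3 / 2) := div_nonneg (Real.log_nonneg i2) hl.le
    simp only [g]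
    rw [← Nat.succ_le_iff, Nat.succ_eq_add_one, ← Nat.floor_add_one k6]
    exact Nat.floor_le_floor k5
  have hinj : Set.InjOn g Us := by
    intro u hu u' hu' h
    apply hinjv
    rcases lt_trichotomy (val u) (val u') with h' | h' | h'
    · exact absurd h (hlt u hu u' hu' h').ne
    · exact h'
    · exact absurd h (hlt u' hu' u hu h').ne'
  let K : ℕ := ⌊Real.log ε / Real.log (3 / 2)⌋₊
  have hmaps : Set.MapsTo g Us (Finset.range (K + 1) : Finset ℕ) := by
    rintro u ⟨i1, i2, i3⟩
    rw [Finset.mem_coe, Finset.mem_range, Nat.lt_add_one_iff]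
    apply Nat.floor_le_floor
    exact div_le_div_of_nonneg_right (Real.log_le_log (by linarith) i3.le) hl.le
  have hfin : Us.Finite := Set.Finite.of_injOn hmaps hinj (Finset.finite_toSet _)
  refine ⟨hfin.toFinset, ?_, ?_⟩
  · have hc : hfin.toFinset.card ≤ (Finset.range (K + 1)).card :=
      Finset.card_le_card_of_injOn g (by simpa using hmaps) (by simpa using hinj)
    rw [Finset.card_range] at hc
    have : (K : ℝ) ≤ Real.log ε / Real.log (3 / 2) :=
      Nat.floor_le (div_nonneg (Real.log_nonneg hε.le) hl.le)
    have h3 : (hfin.toFinset.card : ℝ) ≤ K + 1 := by exact_mod_cast hc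
    linarith
  · have hε0 : (ε : ℂ) ≠ 0 := by exact_mod_cast (by linarith : ε ≠ 0)
    have main : ∀ a : ℝ, 0 < a → (a : ℂ) ∈ latt r 1 → (a : ℂ)⁻¹ ∈ latt r 1 →
        ∃ u ∈ hfin.toFinset, ∃ η : ℂ, η ≠ 0 ∧
          η ∈ latt r f ∧ η⁻¹ ∈ latt r f ∧ (a : ℂ) = η * (u.1 + u.2 * (r : ℂ)) := by
      intro a ha a1 a2
      obtain ⟨n, n1, n2⟩ := exists_mem_Ico_zpow ha hε
      have hp : 0 < ε ^ n := zpow_pos (by linarith) n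
      have e1 : (ε : ℂ) ^ n ∈ latt r f := latt_zpow hq h1 h2 n
      have e2 : ((ε : ℂ) ^ n)⁻¹ ∈ latt r f := by rw [← zpow_neg]; exact latt_zpow hq h1 h2 _
      have hne : (ε : ℂ) ^ n ≠ 0 := zpow_ne_zero _ hε0
      obtain ⟨x, y, hxy⟩ := mem_latt_one.1 (mul_mem_latt hq a1 (latt_le _ _ e2))
      have hvv : val (x, y) = a / ε ^ n := by
        have : ((val (x, y) : ℝ) : ℂ) = ((a / ε ^ n : ℝ) : ℂ) := by
          rw [hval, ← hxy]; push_cast; rw [div_eq_mul_inv]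
        exact_mod_cast this
      refine ⟨(x, y), ?_, (ε : ℂ) ^ n, hne, e1, e2, ?_⟩
      · rw [Set.Finite.mem_toFinset]
        refine ⟨?_, ?_, ?_⟩
        · rw [hvv]; push_cast
          rw [inv_div, div_eq_mul_inv]
          exact mul_mem_latt hq (latt_le _ _ e1) a2
        · rw [hvv, le_div_iff₀ hp]; linarith
        · rw [hvv, div_lt_iff₀ hp]
          rw [zpow_add₀ (by linarith), zpow_one] at n2
          linarith
      · simp only
        rw [← hxy]; field_simp
    intro α h0 a1 a2
    obtain ⟨x, y, hxy⟩ := mem_latt_one.1 a1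
    obtain ⟨a, rfl⟩ : ∃ a : ℝ, α = a := ⟨x + y * r, by rw [hxy]; push_cast; rfl⟩
    have ha0 : a ≠ 0 := by exact_mod_cast h0
    rcases lt_or_gt_of_ne ha0 with h | h
    · obtain ⟨u, hu, η, b0, b1, b2, b3⟩ := main (-a) (by linarith)
        (by push_cast; exact neg_mem a1) (by push_cast; rw [inv_neg]; exact neg_mem a2)
      refine ⟨u, hu, -η, neg_ne_zero.2 b0, neg_mem b1, by rw [inv_neg]; exact neg_mem b2, ?_⟩
      push_cast at b3
      linear_combination -b3
    · exact main a h a1 a2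


/-- Real generator of the maximal order. -/
def rgen (D : ℤ) : ℝ := ((D : ℝ) + Real.sqrt D) / 2

lemma isQ_rgen {D : ℤ} (hD : 0 < D) (hmod : D % 4 = 0 ∨ D % 4 = 1) (hns : ¬ IsSquare D) :
    ∃ m : ℤ, IsQ (rgen D : ℂ) D m := by
  have hdvd : (4 : ℤ) ∣ D * D - D := by
    rcases hmod with h | h
    · obtain ⟨k, hk⟩ : ∃ k, D = 4 * k := ⟨D / 4, by omega⟩
      exact ⟨k * D - k, by rw [hk]; ring⟩
    · obtain ⟨k, hk⟩ : ∃ k, D = 4 * k + 1 := ⟨D / 4, by omega⟩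
      exact ⟨k * D, by rw [hk]; ring⟩
  obtain ⟨m, hm⟩ := hdvd
  have hsq : Real.sqrt D * Real.sqrt D = D := Real.mul_self_sqrt (by exact_mod_cast hD.le)
  have hmR : (D : ℝ) * D - D = 4 * m := by exact_mod_cast hm
  refine ⟨m, ⟨?_, ?_⟩⟩
  · have : rgen D * rgen D = D * rgen D - m := by
      unfold rgen
      linear_combination hsq / 4 - hmR / 4
    exact_mod_cast this
  · intro x y h
    have h1 : (x : ℝ) + y * rgen D = 0 := by exact_mod_cast h
    have h2 : (y : ℝ) * Real.sqrt D = -(2 * x + y * D) := by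
      unfold rgen at h1; linarith
    have h3 : y * y * D = (2 * x + y * D) * (2 * x + y * D) := by
      have : (y : ℝ) * y * D = (2 * x + y * D) * (2 * x + y * D) := by
        rw [← hsq]
        linear_combination (y * Real.sqrt D - (2 * x + y * D)) * h2 +
          (4 * x * y : ℝ) * (hsq) * (-1) + (- (y:ℝ)^2 * (D + Real.sqrt D * Real.sqrt D)) * hsq
      exact_mod_cast this
    by_cases hy : y = 0
    · subst hy
      refine ⟨?_, rfl⟩
      simpa using h1
    · exfalso
      apply hns
      have h4 : y ^ 2 ∣ (2 * x + y * D) ^ 2 := ⟨D, by linear_combination -h3⟩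
      rw [Int.pow_dvd_pow_iff two_ne_zero] at h4
      obtain ⟨k, hk⟩ := h4
      refine ⟨k, ?_⟩
      rw [hk] at h3
      have h5 : y * y * (D - k * k) = 0 := by linear_combination h3
      rcases mul_eq_zero.1 h5 with h6 | h6
      · exact absurd (mul_self_eq_zero.1 h6) hy
      · linarith

lemma omegaD_eq {D : ℤ} (hD : 0 < D) : omegaD D = (rgen D : ℂ) := by
  unfold omegaD sqrtD rgen
  rw [if_pos hD.le]
  push_cast
  rfl

lemma rgen_mul {D f : ℤ} (hf : 0 < f) :
    ∃ k : ℤ, rgen (f ^ 2 * D) = f * rgen D + k := by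
  have h : (2 : ℤ) ∣ (f * f - f) * D := by
    refine Dvd.dvd.mul_right ?_ D
    have := Int.even_mul_pred_self f
    rw [even_iff_two_dvd] at this
    convert this using 1
    ring
  obtain ⟨k, hk⟩ := h
  have hkR : ((f : ℝ) * f - f) * D = 2 * k := by exact_mod_cast hk
  refine ⟨k, ?_⟩
  unfold rgen
  have : Real.sqrt ((f ^ 2 * D : ℤ) : ℝ) = f * Real.sqrt D := by
    push_cast
    rw [Real.sqrt_mul (by positivity), Real.sqrt_sq (by exact_mod_cast hf.le)]
  rw [this]
  push_cast
  linear_combination hkR / 2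

lemma qorder_eq {D f m : ℤ} (hD : 0 < D) (hf : 0 < f) (hq : IsQ (rgen D : ℂ) D m) (z : ℂ) :
    z ∈ latt (rgen D : ℂ) f ↔ z ∈ QOrder (f ^ 2 * D) := by
  obtain ⟨k, hk⟩ := rgen_mul (D := D) hf
  have hw : omegaD (f ^ 2 * D) = f * (rgen D : ℂ) + k := by
    rw [omegaD_eq (by positivity), hk]; push_cast; rfl
  constructor
  · rintro ⟨x, y, rfl⟩
    have h1 : omegaD (f ^ 2 * D) ∈ QOrder (f ^ 2 * D) := Subring.subset_closure rfl
    have h2 : (x : ℂ) + f * (y * rgen D) = ((x - y * k : ℤ) : ℂ) + (y : ℂ) * omegaD (f ^ 2 * D) := by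
      rw [hw]; push_cast; ring
    rw [h2]
    exact add_mem (intCast_mem _ _) (mul_mem (intCast_mem _ _) h1)
  · intro hz
    unfold QOrder at hz
    induction hz using Subring.closure_induction with
    | mem x hx =>
      rw [Set.mem_singleton_iff] at hx
      rw [hx, hw]
      exact ⟨k, 1, by push_cast; ring⟩
    | zero => exact zero_mem _
    | one => exact one_mem_latt _ _
    | add x y _ _ h1 h2 => exact add_mem h1 h2
    | neg x _ h1 => exact neg_mem h1
    | mul x y _ _ h1 h2 => exact mul_mem_latt hq h1 h2

lemma eps_props {n s Δ : ℤ} (hn : 1 ≤ n) (hs : s = 1 ∨ s = -1) (hΔ : Δ = n ^ 2 - 4 * s)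
    (hpos : 0 < Δ) (hns : ¬ IsSquare Δ) :
    ∃ ε : ℝ, 1 < ε ∧ ε ≤ n + 2 ∧ (ε : ℂ) ∈ QOrder Δ ∧ (ε : ℂ)⁻¹ ∈ QOrder Δ := by
  have hss : s * s = 1 := by rcases hs with rfl | rfl <;> norm_num
  have hΔ1 : 1 < Δ := by
    rcases lt_or_eq_of_le (Int.add_one_le_iff.2 hpos) with h | h
    · simpa using h
    · exact absurd ⟨1, by rw [← h]; norm_num⟩ hns
  have hnR : (1 : ℝ) ≤ n := by exact_mod_cast hn
  have hsq : Real.sqrt Δ * Real.sqrt Δ = Δ := Real.mul_self_sqrt (by exact_mod_cast hpos.le)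
  have hs1 : 1 < Real.sqrt Δ := by
    rw [Real.lt_sqrt (by norm_num)]
    have : (1 : ℝ) < Δ := by exact_mod_cast hΔ1
    simpa using this
  have hΔR : (Δ : ℝ) = n ^ 2 - 4 * s := by exact_mod_cast hΔ
  have hs2 : Real.sqrt Δ ≤ n + 2 := by
    apply Real.sqrt_le_iff.2
    refine ⟨by linarith, ?_⟩
    rw [hΔR]
    rcases hs with rfl | rfl <;> push_cast <;> nlinarith
  obtain ⟨k, hk⟩ : ∃ k : ℤ, n - Δ = 2 * k := by
    have := Int.even_mul_pred_self n
    rw [even_iff_two_dvd] at this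
    obtain ⟨j, hj⟩ := this
    exact ⟨2 * s - j, by rw [hΔ]; linear_combination -hj⟩
  have hkR : (n : ℝ) - Δ = 2 * k := by exact_mod_cast hk
  have hε : (n + Real.sqrt Δ) / 2 = rgen Δ + k := by
    unfold rgen; linear_combination hkR / 2
  have hm1 : (((n + Real.sqrt Δ) / 2 : ℝ) : ℂ) ∈ QOrder Δ := by
    rw [hε]
    push_cast
    rw [← omegaD_eq hpos]
    exact add_mem (Subring.subset_closure rfl) (intCast_mem _ _)
  refine ⟨(n + Real.sqrt Δ) / 2, by linarith, by linarith, hm1, ?_⟩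
  have hinv : ((n + Real.sqrt Δ) / 2)⁻¹ = s * (n - (n + Real.sqrt Δ) / 2) := by
    apply inv_eq_of_mul_eq_one_right
    have hssR : (s : ℝ) * s = 1 := by exact_mod_cast hss
    linear_combination (-(s : ℝ) / 4) * hsq - (s : ℝ) / 4 * hΔR + hssR
  have : (((n + Real.sqrt Δ) / 2 : ℝ) : ℂ)⁻¹ = (s : ℂ) * ((n : ℂ) - (((n + Real.sqrt Δ) / 2 : ℝ) : ℂ)) := by
    exact_mod_cast congrArg (Complex.ofReal) hinv
  rw [this]
  exact mul_mem (intCast_mem _ _) (sub_mem (intCast_mem _ _) hm1)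

lemma main_bounds (D : ℤ) : ∃ K : ℕ, 0 < K ∧ (0 < D → (D % 4 = 0 ∨ D % 4 = 1) → ¬ IsSquare D →
    ∀ (n s Δ : ℤ) (f : ℕ), 1 ≤ n → (s = 1 ∨ s = -1) → Δ = n ^ 2 - 4 * s → 0 < Δ → ¬ IsSquare Δ →
      0 < f → Δ = (f : ℤ) ^ 2 * D →
      0 < classNumber Δ ∧ classNumber Δ * f.totient ≤ K * f ^ 2 ∧
      ∃ U : ℕ, (U : ℝ) ≤ Real.log (n + 2) / Real.log (3 / 2) + 1 ∧
        f.totient ≤ classNumber Δ * U) := by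
  by_cases hgood : 0 < D ∧ (D % 4 = 0 ∨ D % 4 = 1) ∧ ¬ IsSquare D
  swap
  · exact ⟨1, one_pos, fun h1 h2 h3 => absurd ⟨h1, h2, h3⟩ hgood⟩
  obtain ⟨hD, hmod, hns⟩ := hgood
  obtain ⟨m, hq⟩ := isQ_rgen hD hmod hns
  obtain ⟨T, hT⟩ := exists_finite_reps hq
  refine ⟨T.card + 1, by omega, ?_⟩
  intro _ _ _ n s Δ f hn hs hΔ hpos hΔns hf hΔf
  have hfz : (0 : ℤ) < f := by exact_mod_cast hf
  have hR : ∀ z, z ∈ latt (rgen D : ℂ) (f : ℤ) ↔ z ∈ QOrder Δ := by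
    intro z; rw [hΔf]; exact qorder_eq hD hfz hq z
  obtain ⟨hfin, hup⟩ := upper_bound hq T hT hf.ne' (QOrder Δ) hR
  obtain ⟨ε, e1, e2, e3, e4⟩ := eps_props hn hs hΔ hpos hΔns
  obtain ⟨U, hU, hU'⟩ := exists_units hq e1 ((hR _).2 e3) ((hR _).2 e4)
  have hlow := lower_bound hq hf.ne' U hU' (QOrder Δ) hR hfin
  refine ⟨Nat.card_pos, ?_, U.card, ?_, hlow⟩
  · exact hup.trans (Nat.mul_le_mul_right _ (by omega))
  · refine hU.trans ?_
    have hl : 0 < Real.log (3 / 2) := Real.log_pos (by norm_num)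
    have := div_le_div_of_nonneg_right (Real.log_le_log (by linarith) e2) hl.le
    linarith

lemma final_analysis {n f h φ U K N : ℝ} (hn : 1 ≤ n) (hf : 1 ≤ f) (hh : 1 ≤ h) (hφ : 1 ≤ φ)
    (hK : 1 ≤ K) (hN : 1 ≤ N)
    (hfn : f ≤ n + 2) (hnf : n ≤ 5 * N * f) (hφf : f ≤ φ * (2 * Real.log (n + 20)))
    (hup : h * φ ≤ K * f ^ 2) (hU : U ≤ Real.log (n + 2) / Real.log (3 / 2) + 1)
    (hlow : φ ≤ h * U) (hL3 : 3 ≤ Real.log (n + 20)) :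
    |Real.log h - Real.log n| ≤
      (Real.log (6 * K) + Real.log (40 * N) + 2) * Real.log (Real.log (n + 20)) := by
  set L := Real.log (n + 20) with hL
  have hl1 : 1 ≤ Real.log L := by
    rw [Real.le_log_iff_exp_le (by linarith)]
    have := Real.exp_one_lt_d9
    linarith
  have hll : 1 / 3 ≤ Real.log (3 / 2) := by
    have := Real.one_sub_inv_le_log_of_pos (x := 3 / 2) (by norm_num)
    norm_num at this ⊢
    linarith
  have hU4 : U ≤ 4 * L := by
    have h1 : Real.log (n + 2) ≤ L := Real.log_le_log (by linarith) (by linarith)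
    have h2 : Real.log (n + 2) / Real.log (3 / 2) ≤ 3 * L := by
      rw [div_le_iff₀ (by linarith)]
      nlinarith
    linarith
  have k1 : 0 ≤ Real.log (6 * K) := Real.log_nonneg (by linarith)
  have k2 : 0 ≤ Real.log (40 * N) := Real.log_nonneg (by linarith)
  have up : h ≤ 6 * K * n * L := by
    have h1 : h * f ≤ (2 * K * f * L) * f := by
      calc h * f ≤ h * (φ * (2 * L)) := mul_le_mul_of_nonneg_left hφf (by linarith)
        _ = (h * φ) * (2 * L) := by ring
        _ ≤ (K * f ^ 2) * (2 * L) := mul_le_mul_of_nonneg_right hup (by linarith)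
        _ = _ := by ring
    have h2 := le_of_mul_le_mul_right h1 (by linarith)
    have h3 : f ≤ 3 * n := by linarith
    calc h ≤ 2 * K * f * L := h2
      _ ≤ 2 * K * (3 * n) * L := by gcongr
      _ = _ := by ring
  have low : n ≤ 40 * N * h * L ^ 2 := by
    calc n ≤ 5 * N * f := hnf
      _ ≤ 5 * N * (φ * (2 * L)) := by gcongr
      _ ≤ 5 * N * ((h * (4 * L)) * (2 * L)) := by
        have : φ ≤ h * (4 * L) := hlow.trans (mul_le_mul_of_nonneg_left hU4 (by linarith))
        gcongr
      _ = _ := by ring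
  have up' : Real.log h ≤ Real.log (6 * K) + Real.log n + Real.log L := by
    have := Real.log_le_log (by linarith) up
    rwa [Real.log_mul (by positivity) (by positivity), Real.log_mul (by positivity) (by positivity)] at this
  have low' : Real.log n ≤ Real.log (40 * N) + Real.log h + 2 * Real.log L := by
    have := Real.log_le_log (by linarith) low
    rw [Real.log_mul (by positivity) (by positivity), Real.log_mul (by positivity) (by positivity),
      Real.log_pow] at this
    exact_mod_cast this
  rw [abs_le]
  constructor <;> nlinarith

lemma bound_main (N : ℤ) (hN : 0 < N) :
    ∃ C : ℝ, 0 < C ∧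
      ∀ n s Δ Δ₀ f : ℤ, 1 ≤ n → (s = 1 ∨ s = -1) → Δ = n ^ 2 - 4 * s →
        0 < Δ → ¬ IsSquare Δ →
        IsFundamentalDiscriminant Δ₀ → 1 ≤ f → Δ = f ^ 2 * Δ₀ → Δ₀ ≤ N →
        |Real.log (classNumber Δ) - Real.log n| ≤
          C * Real.log (Real.log ((n : ℝ) + 20)) := by
  choose K hK hmain using main_bounds
  let M : ℕ := 1 + ∑ D ∈ Finset.Icc 1 N, K D
  have hM1 : (1 : ℝ) ≤ M := by simp [M]; positivity
  have hN1 : (1 : ℝ) ≤ N := by exact_mod_cast hN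
  have k1 : 0 ≤ Real.log (6 * M) := Real.log_nonneg (by linarith)
  have k2 : 0 ≤ Real.log (40 * N) := Real.log_nonneg (by linarith)
  refine ⟨Real.log (6 * M) + Real.log (40 * N) + 2, by linarith, ?_⟩
  intro n s Δ D f hn hs hΔ hpos hns hfund hf hΔf hDN
  have hD : 0 < D := by
    rw [hΔf] at hpos
    exact pos_of_mul_pos_right hpos (by positivity)
  have hmod : D % 4 = 0 ∨ D % 4 = 1 := by
    rcases hfund with h | h
    · exact Or.inr h.1
    · exact Or.inl h.1
  have hDns : ¬ IsSquare D := by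
    rintro ⟨k, hk⟩
    exact hns ⟨f * k, by rw [hΔf, hk]; ring⟩
  obtain ⟨g, rfl⟩ := Int.eq_ofNat_of_zero_le (by omega : 0 ≤ f)
  have hg : 0 < g := by omega
  obtain ⟨c1, c2, U, c3, c4⟩ := hmain D hD hmod hDns n s Δ g hn hs hΔ hpos hns hg hΔf
  have hKM : K D ≤ M := by
    have : K D ≤ ∑ D ∈ Finset.Icc 1 N, K D :=
      Finset.single_le_sum (fun _ _ => Nat.zero_le _) (Finset.mem_Icc.2 ⟨hD, hDN⟩)
    omega
  have hnR : (1 : ℝ) ≤ n := by exact_mod_cast hn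
  have hgR : (1 : ℝ) ≤ g := by exact_mod_cast hg
  have hL3 : 3 ≤ Real.log ((n : ℝ) + 20) := by
    rw [Real.le_log_iff_exp_le (by linarith)]
    have h1 : Real.exp 3 = Real.exp 1 ^ 3 := by rw [← Real.exp_nat_mul]; norm_num
    have h2 : Real.exp 1 ^ 3 ≤ 2.7182818286 ^ 3 :=
      pow_le_pow_left₀ (Real.exp_pos _).le Real.exp_one_lt_d9.le 3
    rw [h1]
    norm_num at h2 ⊢
    linarith
  have hsle : s ≤ 1 ∧ -1 ≤ s := by omega
  have hgn : (g : ℤ) ≤ n + 2 := by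
    apply le_of_sq_le_sq _ (by omega)
    nlinarith
  have hng : n ≤ 5 * N * g := by
    have hgz : (1 : ℤ) ≤ g := hf
    have h1 : n ^ 2 ≤ 5 * ((g : ℤ) ^ 2 * D) := by nlinarith
    have h2 : (g : ℤ) ^ 2 * D ≤ (g : ℤ) ^ 2 * N := by gcongr
    apply le_of_sq_le_sq _ (by positivity)
    nlinarith [sq_nonneg (g : ℤ), mul_nonneg (mul_nonneg (sq_nonneg (g : ℤ)) hN.le) (by omega : 0 ≤ N - 1)]
  have hlogn : Real.log g ≤ Real.log ((n : ℝ) + 20) := by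
    apply Real.log_le_log (by linarith)
    have : (g : ℝ) ≤ n + 2 := by exact_mod_cast hgn
    linarith
  have hnl : ((Nat.log 2 g + 1 : ℕ) : ℝ) ≤ 2 * Real.log ((n : ℝ) + 20) := by
    have h1 : 2 ^ Nat.log 2 g ≤ g := Nat.pow_log_le_self 2 hg.ne'
    have h2 : ((2 : ℝ)) ^ Nat.log 2 g ≤ g := by exact_mod_cast h1
    have h3 := Real.log_le_log (by positivity) h2
    rw [Real.log_pow] at h3
    have h4 := Real.log_two_gt_d9
    have h5 : (0 : ℝ) ≤ Nat.log 2 g := by positivity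
    push_cast
    nlinarith
  refine final_analysis (f := g) (φ := g.totient) (U := U) hnR hgR (by exact_mod_cast c1)
    (by exact_mod_cast Nat.totient_pos.2 hg) hM1 hN1 (by exact_mod_cast hgn)
    (by exact_mod_cast hng) ?_ ?_ c3 (by exact_mod_cast c4) hL3
  · have h1 : (g : ℝ) ≤ g.totient * ((Nat.log 2 g + 1 : ℕ) : ℝ) := by
      exact_mod_cast totient_lower g hg.ne'
    exact h1.trans (mul_le_mul_of_nonneg_left hnl (by positivity))
  · have := c2.trans (Nat.mul_le_mul_right (g ^ 2) hKM)
    exact_mod_cast this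

/-- For every bound `N > 0` there is an effective constant `C(N) > 0` such that for any
unit-generated-order discriminant `Δ = n² ∓ 4 > 0` (nonsquare), written as `Δ = f²Δ₀`
with `Δ₀` fundamental and `f ≥ 1` the conductor, if `Δ₀ ≤ N` then
`|log h_Δ - log n| ≤ C(N) · log log (n + 20)`. -/
theorem effective_classNumber_bound_bounded_fundamental (N : ℤ) (hN : 0 < N) :
    ∃ C : ℝ, 0 < C ∧
      ∀ n s Δ Δ₀ f : ℤ, 1 ≤ n → (s = 1 ∨ s = -1) → Δ = n ^ 2 - 4 * s →
        0 < Δ → ¬ IsSquare Δ →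
        IsFundamentalDiscriminant Δ₀ → 1 ≤ f → Δ = f ^ 2 * Δ₀ → Δ₀ ≤ N →
        |Real.log (classNumber Δ) - Real.log n| ≤
          C * Real.log (Real.log ((n : ℝ) + 20)) := by
  exact bound_main N hN
end
end

section
/- Let Δ = n² + 4 for an integer n ≥ 1. (1) If n is even, O_Δ is a maximal order (Δ is a fundamental discriminant), and the class number h_Δ = 1, then n = 2 (so Δ = 8). (2) If n ≡ 2 (mod 4) and n ≥ 6, then the class number h_Δ is even, regardless of whether O_Δ is maximal. -/
noncomputable section

/-- `O_Δ` is a maximal order: every element of `ℚ(√Δ)` (the subfield of `ℂ` generated by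
`(Δ+√Δ)/2`) that is integral over `ℤ` already lies in `O_Δ`. -/
def IsMaximalOrder (d : ℤ) : Prop :=
  ∀ x ∈ Subfield.closure {omegaD d}, IsIntegral ℤ x → x ∈ QOrder d

theorem pell_aux (m : ℤ) (hm : 3 ≤ m) (k : ℕ) :
    ∀ x y : ℤ, 0 ≤ x → 0 ≤ y → y.toNat = k →
      (x * x - (m ^ 2 + 1) * y * y) ^ 2 ≠ 4 := by
  induction k using Nat.strong_induction_on with
  | _ k ih =>
    intro x y hx hy hk h
    have h2 : x * x - (m ^ 2 + 1) * y * y = 2 ∨ x * x - (m ^ 2 + 1) * y * y = -2 := by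
      have : (x * x - (m ^ 2 + 1) * y * y - 2) * (x * x - (m ^ 2 + 1) * y * y + 2) = 0 := by
        linear_combination h
      rcases mul_eq_zero.mp this with h | h
      · left; linarith
      · right; linarith
    rcases hy.eq_or_lt with h0 | hpos
    · subst h0
      have hx2 : x < 2 := by rcases h2 with h2 | h2 <;> nlinarith
      interval_cases x <;> omega
    · have hyy : 1 ≤ y * y := by nlinarith
      have hmyy : 3 ≤ m * (y * y) := by nlinarith
      have hub : x < y * (m + 1) := by
        by_contra! hc
        have : (y * (m + 1)) * (y * (m + 1)) ≤ x * x := mul_self_le_mul_self (by positivity) hc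
        rcases h2 with h2 | h2 <;> nlinarith
      have hlb : y * (m - 1) < x := by
        by_contra! hc
        have : x * x ≤ (y * (m - 1)) * (y * (m - 1)) := mul_self_le_mul_self hx hc
        rcases h2 with h2 | h2 <;> nlinarith
      have hlt : |y * m - x| < y := by
        rw [abs_lt]; constructor <;> linarith
      refine ih (|y * m - x|).toNat (by omega) |x * m - y * (m ^ 2 + 1)| |y * m - x|
        (abs_nonneg _) (abs_nonneg _) rfl ?_
      rw [mul_assoc (m ^ 2 + 1), abs_mul_abs_self, abs_mul_abs_self]
      linear_combination h

theorem pell_norm (m : ℤ) (hm : 3 ≤ m) (z : ℤ√(m ^ 2 + 1)) : z.norm ^ 2 ≠ 4 := by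
  intro h
  refine pell_aux m hm _ |z.re| |z.im| (abs_nonneg _) (abs_nonneg _) rfl ?_
  rw [mul_assoc (m ^ 2 + 1), abs_mul_abs_self, abs_mul_abs_self, ← h, Zsqrtd.norm_def]
  ring

theorem even_card_of_equiv {R : Type*} [CommRing R] [IsDomain R] (m : ℤ) (hm : 3 ≤ m)
    (hodd : m % 2 = 1) (e : R ≃+* ℤ√(m ^ 2 + 1)) (h2 : (2 : R) ≠ 0) :
    Even (Nat.card (ClassGroup R)) := by
  obtain ⟨s, hs⟩ := e.surjective ⟨0, 1⟩
  obtain ⟨j, rfl⟩ : ∃ j, m = 2 * j + 1 := ⟨m / 2, by omega⟩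
  have hss : s * s = 2 * (2 * (j : R) ^ 2 + 2 * j + 1) := by
    apply e.injective
    simp only [map_mul, map_add, map_pow, hs, map_ofNat, map_one, map_intCast]
    have : ((2 * (2 * (j : ℤ√((2 * j + 1) ^ 2 + 1)) ^ 2 + 2 * j + 1))) =
      ((2 * (2 * j ^ 2 + 2 * j + 1) : ℤ) : ℤ√((2 * j + 1) ^ 2 + 1)) := by push_cast; ring
    rw [this]
    ext
    · rw [Zsqrtd.re_intCast]; simp; ring
    · rw [Zsqrtd.im_intCast]; simp
  let I : Ideal R := Ideal.span {2, s}
  have hI : I * I = Ideal.span {2} := by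
    simp only [I, Ideal.span_pair_mul_span_pair]
    apply le_antisymm
    · rw [Ideal.span_le]
      rintro x (rfl | rfl | rfl | rfl)
      · exact Ideal.mem_span_singleton.mpr ⟨2, rfl⟩
      · exact Ideal.mem_span_singleton.mpr ⟨s, rfl⟩
      · exact Ideal.mem_span_singleton.mpr ⟨s, mul_comm _ _⟩
      · exact Ideal.mem_span_singleton.mpr ⟨_, hss⟩
    · rw [Ideal.span_singleton_le_iff_mem]
      have : (2 : R) = s * s - ((j : R) ^ 2 + j) * (2 * 2) := by rw [hss]; ring
      have h3 : s * s - ((j : R) ^ 2 + j) * (2 * 2) ∈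
          Ideal.span {2 * 2, 2 * s, s * 2, s * s} :=
        Ideal.sub_mem _ (Ideal.subset_span (by simp)) (Ideal.mul_mem_left _ _ (Ideal.subset_span (by simp)))
      rwa [← this] at h3
  let K := FractionRing R
  have h2K : (algebraMap R K 2) ≠ 0 := by
    simpa using (map_ne_zero_iff _ (IsFractionRing.injective R K)).mpr h2
  let u : Kˣ := Units.mk0 _ h2K
  let J : FractionalIdeal (nonZeroDivisors R) K := I
  have hJ : J * J = FractionalIdeal.spanSingleton (nonZeroDivisors R) (algebraMap R K 2) := by
    simp only [J]
    rw [← FractionalIdeal.coeIdeal_mul, hI, FractionalIdeal.coeIdeal_span_singleton]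
  have hJu : J * (J * FractionalIdeal.spanSingleton (nonZeroDivisors R) (algebraMap R K 2)⁻¹) = 1 := by
    rw [← mul_assoc, hJ, FractionalIdeal.spanSingleton_mul_spanSingleton, mul_inv_cancel₀ h2K,
      FractionalIdeal.spanSingleton_one]
  let U : (FractionalIdeal (nonZeroDivisors R) K)ˣ := Units.mkOfMulEqOne _ _ hJu
  have hU : (U : FractionalIdeal (nonZeroDivisors R) K) = (I : FractionalIdeal (nonZeroDivisors R) K) := rfl
  have hsq : ClassGroup.mk K U ^ 2 = 1 := by
    rw [← map_pow]
    refine (ClassGroup.mk_eq_one_of_coe_ideal (I' := Ideal.span {2}) ?_).mpr ⟨2, h2, rfl⟩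
    rw [← hI, pow_two, Units.val_mul, hU, FractionalIdeal.coeIdeal_mul]
  have hne : ClassGroup.mk K U ≠ 1 := by
    intro h
    obtain ⟨a, ha, hIa⟩ := (ClassGroup.mk_eq_one_of_coe_ideal hU).mp h
    rw [hIa, Ideal.span_singleton_mul_span_singleton, Ideal.span_singleton_eq_span_singleton] at hI
    obtain ⟨v, hv⟩ := hI
    have hv2 := congrArg (fun z => (e z).norm) hv
    have hvu : IsUnit (e (v : R)) := v.isUnit.map e
    rw [Zsqrtd.isUnit_iff_norm_isUnit, Int.isUnit_iff] at hvu
    simp only [map_mul, Zsqrtd.norm_mul, map_ofNat] at hv2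
    have h4 : (2 : ℤ√((2 * j + 1) ^ 2 + 1)).norm = 4 := by
      simpa using Zsqrtd.norm_intCast (d := (2 * j + 1) ^ 2 + 1) 2
    rw [h4] at hv2
    rcases hvu with hvu | hvu
    · rw [hvu] at hv2
      exact pell_norm _ hm (e a) (by linarith)
    · rw [hvu] at hv2
      nlinarith
  have := orderOf_dvd_natCard (ClassGroup.mk K U)
  rw [orderOf_eq_prime hsq hne] at this
  exact even_iff_two_dvd.mpr this

theorem sqrtD_half (m : ℤ) :
    (sqrtD ((2 * m) ^ 2 + 4) / 2) * (sqrtD ((2 * m) ^ 2 + 4) / 2) = ((m ^ 2 + 1 : ℤ) : ℂ) := by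
  have h0 : (0 : ℤ) ≤ (2 * m) ^ 2 + 4 := by positivity
  have h : sqrtD ((2 * m) ^ 2 + 4) * sqrtD ((2 * m) ^ 2 + 4) = (((2 * m) ^ 2 + 4 : ℤ) : ℂ) := by
    rw [sqrtD, if_pos h0, ← Complex.ofReal_mul, Real.mul_self_sqrt (by exact_mod_cast h0)]
    simp
  have h3 : ((m ^ 2 + 1 : ℤ) : ℂ) = (((2 * m) ^ 2 + 4 : ℤ) : ℂ) / 4 := by push_cast; ring
  rw [h3, ← h]; ring

theorem omegaD_eq_s16 (m : ℤ) : omegaD ((2 * m) ^ 2 + 4) =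
    ((2 * (m ^ 2 + 1) : ℤ) : ℂ) + sqrtD ((2 * m) ^ 2 + 4) / 2 := by
  rw [omegaD]; push_cast; ring

def liftD (m : ℤ) : ℤ√(m ^ 2 + 1) →+* ℂ := Zsqrtd.lift ⟨_, sqrtD_half m⟩

theorem liftD_apply (m : ℤ) (z : ℤ√(m ^ 2 + 1)) :
    liftD m z = z.re + z.im * (sqrtD ((2 * m) ^ 2 + 4) / 2) := rfl

theorem nonsq (m : ℤ) (hm : 1 ≤ m) (n : ℤ) : m ^ 2 + 1 ≠ n * n := by
  intro h
  rw [← abs_mul_abs_self] at h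
  have := abs_nonneg n
  have h1 : m < |n| := by nlinarith
  nlinarith

theorem liftD_injective (m : ℤ) (hm : 1 ≤ m) : Function.Injective (liftD m) :=
  Zsqrtd.lift_injective _ (nonsq m hm)

theorem QOrder_eq (m : ℤ) : QOrder ((2 * m) ^ 2 + 4) = (liftD m).range := by
  apply le_antisymm
  · rw [QOrder, Subring.closure_le, Set.singleton_subset_iff]
    refine ⟨⟨2 * (m ^ 2 + 1), 1⟩, ?_⟩
    rw [liftD_apply, omegaD_eq_s16]; simp
  · rintro _ ⟨z, rfl⟩
    have hw : omegaD ((2 * m) ^ 2 + 4) ∈ QOrder ((2 * m) ^ 2 + 4) :=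
      Subring.subset_closure rfl
    have hs : sqrtD ((2 * m) ^ 2 + 4) / 2 ∈ QOrder ((2 * m) ^ 2 + 4) := by
      have := sub_mem hw (intCast_mem (QOrder ((2 * m) ^ 2 + 4)) (2 * (m ^ 2 + 1)))
      rwa [omegaD_eq_s16, add_sub_cancel_left] at this
    rw [liftD_apply]
    exact add_mem (intCast_mem _ _) (mul_mem (intCast_mem _ _) hs)

theorem even_classNumber (m : ℤ) (hm : 3 ≤ m) (hodd : m % 2 = 1) :
    Even (classNumber ((2 * m) ^ 2 + 4)) := by
  rw [classNumber]
  exact even_card_of_equiv m hm hodd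
    ((RingEquiv.subringCongr (QOrder_eq m)).trans (RingEquiv.ofBijective (liftD m).rangeRestrict
      ⟨fun a b h => liftD_injective m (by linarith) (congrArg Subtype.val h),
        (liftD m).rangeRestrict_surjective⟩).symm) two_ne_zero

theorem not_maximal (j : ℤ) (hj : 1 ≤ j) : ¬ IsMaximalOrder ((2 * (2 * j)) ^ 2 + 4) := by
  intro h
  have hr := sqrtD_half (2 * j)
  set r := sqrtD ((2 * (2 * j)) ^ 2 + 4) / 2 with hrdef
  have hint : IsIntegral ℤ ((1 + r) / 2) := by
    refine ⟨Polynomial.X ^ 2 - Polynomial.X - Polynomial.C (j ^ 2), ?_, ?_⟩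
    · monicity!
    · simp only [Polynomial.eval₂_sub, Polynomial.eval₂_pow, Polynomial.eval₂_X,
        Polynomial.eval₂_C, algebraMap_int_eq]
      simp only [eq_intCast]
      push_cast at hr ⊢
      linear_combination hr / 4
  have hmem : (1 + r) / 2 ∈ Subfield.closure {omegaD ((2 * (2 * j)) ^ 2 + 4)} := by
    have hw : omegaD ((2 * (2 * j)) ^ 2 + 4) ∈
      Subfield.closure {omegaD ((2 * (2 * j)) ^ 2 + 4)} := Subfield.subset_closure rfl
    have hs := sub_mem hw (intCast_mem (Subfield.closure {omegaD ((2 * (2 * j)) ^ 2 + 4)})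
      (2 * ((2 * j) ^ 2 + 1)))
    rw [omegaD_eq_s16, add_sub_cancel_left, ← omegaD_eq_s16] at hs
    exact div_mem (add_mem (one_mem _) hs) (ofNat_mem _ 2)
  have hq := h _ hmem hint
  rw [QOrder_eq] at hq
  obtain ⟨z, hz⟩ := hq
  have : liftD (2 * j) (2 * z) = liftD (2 * j) ⟨1, 1⟩ := by
    rw [map_mul, hz, map_ofNat, liftD_apply, ← hrdef]
    push_cast; ring
  have h1 := congrArg Zsqrtd.re (liftD_injective _ (by linarith) this)
  rw [two_mul z] at h1
  simp at h1
  omega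

/-- Let `Δ = n² + 4` for `n ≥ 1`. (1) If `n` is even, `O_Δ` is maximal and `h_Δ = 1`,
then `n = 2` (so `Δ = 8`). (2) If `n ≡ 2 (mod 4)` and `n ≥ 6`, then `h_Δ` is even,
regardless of maximality. -/
theorem classNumber_add_even_cases :
    (∀ n : ℤ, 1 ≤ n → Even n → IsMaximalOrder (n ^ 2 + 4) →
      classNumber (n ^ 2 + 4) = 1 → n = 2) ∧
    (∀ n : ℤ, n % 4 = 2 → 6 ≤ n → Even (classNumber (n ^ 2 + 4))) := by
  have key : ∀ n : ℤ, n % 4 = 2 → 6 ≤ n → Even (classNumber (n ^ 2 + 4)) := by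
    intro n hn h6
    obtain ⟨m, rfl⟩ : ∃ m, n = 2 * m := ⟨n / 2, by omega⟩
    exact even_classNumber m (by omega) (by omega)
  refine ⟨fun n h1 he hmax hc => ?_, key⟩
  by_cases h4 : n % 4 = 2
  · by_contra hne
    have := key n h4 (by omega)
    rw [hc] at this
    exact absurd this (by decide)
  · obtain ⟨k, hk⟩ := he
    obtain ⟨j, rfl⟩ : ∃ j, n = 2 * (2 * j) := ⟨n / 4, by omega⟩
    exact absurd hmax (not_maximal j (by omega))
end
end
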